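/- arXiv:1404.0613 — 6 statements merged into one kernel-verified Lean document; each statement's English description precedes it below -/
import Mathlib

section
/- Suppose a ≠ 0, a₁ ≠ 0, a₂ ≠ 0 and a₂² − 4a₁b = 0. Then the Chua system has exactly two equilibrium points: the origin (0,0,0) and p = (−a₂/(2a₁), −a₂b₁/(2a₁), 0). -/
/-- Right-hand side of the Chua system
`ẋ = a(z − b·x − a₂·x² − a₁·x³), ẏ = −z, ż = −b₁·x + y + b₂·z`. -/
def chuaRHS (a a₁ a₂ b b₁ b₂ : ℝ) (p : ℝ × ℝ × ℝ) : ℝ × ℝ × ℝ :=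
  (a * (p.2.2 - b * p.1 - a₂ * p.1 ^ 2 - a₁ * p.1 ^ 3),
   -p.2.2,
   -b₁ * p.1 + p.2.1 + b₂ * p.2.2)

/-!
The last two equations put every equilibrium on the line `x ↦ (x, b₁ x, 0)`, and the first one then
asks that `x` be a root of `x (a₁ x² + a₂ x + b)`. The hypothesis says that the quadratic factor has
discriminant zero, so its only root is `-a₂ / (2 a₁)`.
-/

theorem cubic_eq_zero_iff_of_discrim_eq_zero {K : Type*} [Field K] [NeZero (2 : K)] {a b c : K}
    (ha : a ≠ 0) (h : discrim a b c = 0) (x : K) :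
    a * x ^ 3 + b * x ^ 2 + c * x = 0 ↔ x = 0 ∨ x = -b / (2 * a) := by
  have factor : a * x ^ 3 + b * x ^ 2 + c * x = x * (a * (x * x) + b * x + c) := by ring
  rw [factor, mul_eq_zero, quadratic_eq_zero_iff_of_discrim_eq_zero ha h]

theorem chuaRHS_eq_zero_iff {a : ℝ} (ha : a ≠ 0) (a₁ a₂ b b₁ b₂ x y z : ℝ) :
    chuaRHS a a₁ a₂ b b₁ b₂ (x, y, z) = 0 ↔
      a₁ * x ^ 3 + a₂ * x ^ 2 + b * x = 0 ∧ y = b₁ * x ∧ z = 0 := by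
  simp only [chuaRHS, Prod.mk_eq_zero, mul_eq_zero, ha, false_or, neg_eq_zero]
  constructor
  · rintro ⟨hx, rfl, hy⟩
    exact ⟨by linear_combination -hx, by linear_combination hy, rfl⟩
  · rintro ⟨hx, rfl, rfl⟩
    exact ⟨by linear_combination -hx, rfl, by ring⟩

theorem setOf_chuaRHS_eq_zero {a : ℝ} (ha : a ≠ 0) (a₁ a₂ b b₁ b₂ : ℝ) :
    {p | chuaRHS a a₁ a₂ b b₁ b₂ p = 0} =
      (fun x ↦ (x, b₁ * x, 0)) '' {x : ℝ | a₁ * x ^ 3 + a₂ * x ^ 2 + b * x = 0} := by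
  ext ⟨x, y, z⟩
  simp [chuaRHS_eq_zero_iff ha, eq_comm]

/-- If `a ≠ 0`, `a₁ ≠ 0`, `a₂ ≠ 0` and `a₂² − 4a₁b = 0`, the equilibrium points of the
Chua system are exactly the origin and `p = (−a₂/(2a₁), −a₂b₁/(2a₁), 0)`. -/
theorem chua_equilibria_of_discrim_zero (a a₁ a₂ b b₁ b₂ : ℝ)
    (ha : a ≠ 0) (ha₁ : a₁ ≠ 0) (ha₂ : a₂ ≠ 0) (hD : a₂ ^ 2 - 4 * a₁ * b = 0) :
    {p : ℝ × ℝ × ℝ | chuaRHS a a₁ a₂ b b₁ b₂ p = 0} =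
      {((0 : ℝ), (0 : ℝ), (0 : ℝ)),
       (-a₂ / (2 * a₁), -(a₂ * b₁) / (2 * a₁), 0)} := by
  have roots : {x : ℝ | a₁ * x ^ 3 + a₂ * x ^ 2 + b * x = 0} = {0, -a₂ / (2 * a₁)} :=
    Set.ext (cubic_eq_zero_iff_of_discrim_eq_zero ha₁ hD)
  have hy : b₁ * (-a₂ / (2 * a₁)) = -(a₂ * b₁) / (2 * a₁) := by ring
  rw [setOf_chuaRHS_eq_zero ha, roots, Set.image_pair, mul_zero, hy]
end

section
/- Let a ≠ 0 and ω > 0. The characteristic polynomial det(λ·I − J(0,0,0)) of the Jacobian of the Chua system at the origin equals λ·(λ² + ω²) (equivalently, the origin is a zero-Hopf equilibrium with eigenvalues 0 and ±iω) if and only if b = 0, b₂ = 0 and b₁ = (ω² − 1)/a. -/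
/-!
The characteristic polynomial of a `3 × 3` matrix `M` is `λ³ - tr(M) λ² + tr(adj M) λ - det M`, so
it equals `λ (λ² + c)` exactly when `tr M = 0`, `tr (adj M) = c` and `det M = 0`. For the Chua
Jacobian these three conditions read `b₂ = a b`, `1 + a b₁ - a b b₂ = c` and `a b = 0`, a system
that is triangular once `a` is invertible.
-/

open Polynomial

section CharpolyFinThree

variable {R : Type*} [CommRing R] (M : Matrix (Fin 3) (Fin 3) R)

theorem charpoly_fin_three :
    M.charpoly = Cubic.toPoly ⟨1, -M.trace, M.adjugate.trace, -M.det⟩ := by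
  rw [Matrix.charpoly, Matrix.det_fin_three, Matrix.det_fin_three, Matrix.trace_fin_three,
    Matrix.adjugate_fin_three, Matrix.trace_fin_three]
  simp only [Matrix.charmatrix_apply, Matrix.diagonal_apply, Matrix.of_apply, Matrix.cons_val,
    Fin.reduceEq, if_true, if_false, Cubic.toPoly, map_one, map_neg, map_add, map_sub, map_mul]
  ring

theorem charpoly_fin_three_eq_X_mul_X_sq_add_C_iff (c : R) :
    M.charpoly = X * (X ^ 2 + C c) ↔ M.trace = 0 ∧ M.adjugate.trace = c ∧ M.det = 0 := by
  have toPoly_eq : X * (X ^ 2 + C c) = Cubic.toPoly ⟨1, 0, c, 0⟩ := by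
    simp only [Cubic.toPoly, map_one, map_zero]
    ring
  rw [charpoly_fin_three, toPoly_eq, Cubic.toPoly_injective, Cubic.mk.injEq]
  simp only [neg_eq_zero, true_and]

end CharpolyFinThree

/-- The Jacobian matrix of the Chua system at the origin. Only `a, b, b₁, b₂`
appear, since the terms `a₂ x²` and `a₁ x³` have zero derivative there. -/
def chuaJacobian {R : Type*} [Ring R] (a b b₁ b₂ : R) : Matrix (Fin 3) (Fin 3) R :=
  !![-(a * b), 0, a; 0, 0, -1; -b₁, 1, b₂]

section ChuaJacobian

variable {R : Type*} [CommRing R] (a b b₁ b₂ : R)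

theorem trace_chuaJacobian : (chuaJacobian a b b₁ b₂).trace = b₂ - a * b := by
  simp [chuaJacobian, Matrix.trace_fin_three, neg_add_eq_sub]

theorem trace_adjugate_chuaJacobian :
    (chuaJacobian a b b₁ b₂).adjugate.trace = 1 + a * b₁ - a * b * b₂ := by
  simp only [chuaJacobian, Matrix.adjugate_fin_three, Matrix.trace_fin_three, Matrix.of_apply,
    Matrix.cons_val]
  ring

theorem det_chuaJacobian : (chuaJacobian a b b₁ b₂).det = -(a * b) := by
  simp [chuaJacobian, Matrix.det_fin_three]

theorem charpoly_chuaJacobian_eq_X_mul_X_sq_add_C_iff (c : R) :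
    (chuaJacobian a b b₁ b₂).charpoly = X * (X ^ 2 + C c) ↔
      a * b = 0 ∧ b₂ = 0 ∧ a * b₁ = c - 1 := by
  rw [charpoly_fin_three_eq_X_mul_X_sq_add_C_iff, trace_chuaJacobian, trace_adjugate_chuaJacobian,
    det_chuaJacobian, neg_eq_zero]
  constructor
  · rintro ⟨trace_eq, trace_adjugate_eq, hab⟩
    have hb₂ : b₂ = 0 := by rwa [hab, sub_zero] at trace_eq
    rw [hb₂, mul_zero, sub_zero] at trace_adjugate_eq
    exact ⟨hab, hb₂, eq_sub_of_add_eq' trace_adjugate_eq⟩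
  · rintro ⟨hab, rfl, hab₁⟩
    simp [hab, hab₁]

end ChuaJacobian

theorem chua_origin_zeroHopf_iff_general {K : Type*} [Field K] {a : K} (b b₁ b₂ c : K)
    (ha : a ≠ 0) :
    (chuaJacobian a b b₁ b₂).charpoly = X * (X ^ 2 + C c) ↔
      b = 0 ∧ b₂ = 0 ∧ b₁ = (c - 1) / a := by
  rw [charpoly_chuaJacobian_eq_X_mul_X_sq_add_C_iff, mul_eq_zero_iff_left ha, eq_div_iff ha,
    mul_comm b₁]

/-- For `a ≠ 0` and `ω > 0`, the characteristic polynomial of the Jacobian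
`J(0,0,0) = [[−a·b, 0, a], [0, 0, −1], [−b₁, 1, b₂]]` of the Chua system at the origin
equals `λ·(λ² + ω²)` (i.e. the origin is a zero-Hopf equilibrium with eigenvalues
`0, ±iω`) if and only if `b = 0`, `b₂ = 0` and `b₁ = (ω² − 1)/a`. -/
theorem chua_origin_zeroHopf_iff (a a₁ a₂ b b₁ b₂ ω : ℝ) (ha : a ≠ 0) (hω : 0 < ω) :
    (!![-(a * b), 0, a; 0, 0, -1; -b₁, 1, b₂] : Matrix (Fin 3) (Fin 3) ℝ).charpoly =
        X * (X ^ 2 + C (ω ^ 2)) ↔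
      b = 0 ∧ b₂ = 0 ∧ b₁ = (ω ^ 2 - 1) / a :=
  chua_origin_zeroHopf_iff_general b b₁ b₂ (ω ^ 2) ha
end

section
/- Let ā₀, ā₁, α₂, ζ₀, ζ₂, ω be real numbers with ā₀ ≠ 0, ā₁ ≠ 0, ω ≠ 0, ω² ≠ 1 and ā₁·ζ₀ < 0. Then the set of real numbers w for which there exists r > 0 with g₁(r,w) = 0 and g₂(r,w) = 0 has at most three elements; consequently at most three limit cycles can bifurcate from the zero-Hopf equilibrium p₋ of the Chua system. -/
/-- First component `g₁(r,w)` of the second-order averaged function for the Chua system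
at `p₋`, with `s = √(−ā₁ζ₀)`. -/
noncomputable def g1avg (a₀ a₁ α₂ ζ₀ ζ₂ ω r w : ℝ) : ℝ :=
  Real.pi * r / (4 * ω) *
    (4 * ζ₂ + a₀ * (ω ^ 2 - 1) / (a₁ * ω ^ 6) *
      (4 * a₀ * a₁ * w * (α₂ + 6 * Real.sqrt (-(a₁ * ζ₀))) * ω ^ 2 +
        4 * (2 * a₁ * ζ₀ - α₂ * Real.sqrt (-(a₁ * ζ₀))) * ω ^ 4 -
        3 * a₀ ^ 2 * a₁ ^ 2 * (4 * w ^ 2 + 3 * r ^ 2 * ω ^ 2)))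

/-- Second component `g₂(r,w)` of the second-order averaged function for the Chua system
at `p₋`, with `s = √(−ā₁ζ₀)`. -/
noncomputable def g2avg (a₀ a₁ α₂ ζ₀ ζ₂ ω r w : ℝ) : ℝ :=
  a₀ * Real.pi / (2 * a₁ * ω ^ 7) *
    (4 * w * (2 * a₁ * ζ₀ - α₂ * Real.sqrt (-(a₁ * ζ₀))) * ω ^ 4 -
      2 * a₀ ^ 2 * a₁ ^ 2 * w * (2 * w ^ 2 + 3 * r ^ 2 * ω ^ 2) +
      a₀ * a₁ * (α₂ + 6 * Real.sqrt (-(a₁ * ζ₀))) * ω ^ 2 * (2 * w ^ 2 + r ^ 2 * ω ^ 2))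

/-!
In the rescaled unknowns `x = a₀a₁w` and `y = (a₀a₁rω)²` both averaged equations are affine in `y`:
for `r ≠ 0`, `g₁ = 0` gives `9y` as a quadratic polynomial in `x`, and substituting this into
`g₂ = 0` leaves a cubic equation in `x` with leading coefficient `36`. Hence `a₀a₁w` is one of the
at most three roots of a fixed cubic.
-/

section Elimination

variable {R : Type*} [CommRing R]

/-- The first averaged equation in the unknowns `x = a₀a₁w`, `y = (a₀a₁rω)²`, up to a nonzero
factor. -/
def rescaledG1 (b c d x y : R) : R :=
  4 * (b * x + c + d - 3 * x ^ 2) - 9 * y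

/-- The second averaged equation in the unknowns `x = a₀a₁w`, `y = (a₀a₁rω)²`, up to a nonzero
factor. -/
def rescaledG2 (b c x y : R) : R :=
  4 * c * x - 2 * x * (2 * x ^ 2 + 3 * y) + b * (2 * x ^ 2 + y)

/-- The cubic in `x` obtained by eliminating `y` from `rescaledG1 b c d x y = 0` and
`rescaledG2 b c x y = 0`. -/
def rescaledEliminant (b c d : R) : Cubic R where
  a := 36
  b := -18 * b
  c := 12 * c + 4 * b ^ 2 - 24 * d
  d := 4 * b * (c + d)

theorem mem_roots_rescaledEliminant [IsDomain R] [CharZero R] {b c d x y : R}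
    (h₁ : rescaledG1 b c d x y = 0) (h₂ : rescaledG2 b c x y = 0) :
    x ∈ (rescaledEliminant b c d).roots := by
  have leading_ne_zero : (rescaledEliminant b c d).a ≠ 0 := by norm_num [rescaledEliminant]
  rw [Cubic.mem_roots_iff (Cubic.ne_zero_of_a_ne_zero leading_ne_zero)]
  unfold rescaledG1 at h₁
  unfold rescaledG2 at h₂
  dsimp only [rescaledEliminant]
  linear_combination 9 * h₂ + (b - 6 * x) * h₁

end Elimination

section Rescaling

/-- The coefficient `b` of the rescaled averaged equations. -/
noncomputable def rescaledB (a₁ α₂ ζ₀ ω : ℝ) : ℝ :=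
  (α₂ + 6 * √(-(a₁ * ζ₀))) * ω ^ 2

/-- The coefficient `c` of the rescaled averaged equations. -/
noncomputable def rescaledC (a₁ α₂ ζ₀ ω : ℝ) : ℝ :=
  (2 * a₁ * ζ₀ - α₂ * √(-(a₁ * ζ₀))) * ω ^ 4

/-- The coefficient `d` of the rescaled averaged equations: the contribution of `ζ₂` once `g₁ = 0`
is divided by `a₀(ω² - 1)/(a₁ω⁶)`. -/
noncomputable def rescaledD (a₀ a₁ ζ₂ ω : ℝ) : ℝ :=
  ζ₂ * a₁ * ω ^ 6 / (a₀ * (ω ^ 2 - 1))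

variable {a₀ a₁ ω r : ℝ} (α₂ ζ₀ ζ₂ w : ℝ)

theorem g1avg_eq_mul_rescaledG1 (ha₀ : a₀ ≠ 0) (ha₁ : a₁ ≠ 0) (hω : ω ≠ 0) (hω1 : ω ^ 2 - 1 ≠ 0) :
    g1avg a₀ a₁ α₂ ζ₀ ζ₂ ω r w =
      Real.pi * r * a₀ * (ω ^ 2 - 1) / (4 * a₁ * ω ^ 7) *
        rescaledG1 (rescaledB a₁ α₂ ζ₀ ω) (rescaledC a₁ α₂ ζ₀ ω) (rescaledD a₀ a₁ ζ₂ ω)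
          (a₀ * a₁ * w) ((a₀ * a₁ * r * ω) ^ 2) := by
  unfold g1avg rescaledG1 rescaledB rescaledC rescaledD
  field_simp
  ring

theorem g2avg_eq_mul_rescaledG2 (ha₁ : a₁ ≠ 0) (hω : ω ≠ 0) :
    g2avg a₀ a₁ α₂ ζ₀ ζ₂ ω r w =
      Real.pi / (2 * a₁ ^ 2 * ω ^ 7) *
        rescaledG2 (rescaledB a₁ α₂ ζ₀ ω) (rescaledC a₁ α₂ ζ₀ ω)
          (a₀ * a₁ * w) ((a₀ * a₁ * r * ω) ^ 2) := by
  unfold g2avg rescaledG2 rescaledB rescaledC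
  field_simp

theorem g1avg_eq_zero_iff (ha₀ : a₀ ≠ 0) (ha₁ : a₁ ≠ 0) (hω : ω ≠ 0) (hω1 : ω ^ 2 ≠ 1)
    (hr : r ≠ 0) :
    g1avg a₀ a₁ α₂ ζ₀ ζ₂ ω r w = 0 ↔
      rescaledG1 (rescaledB a₁ α₂ ζ₀ ω) (rescaledC a₁ α₂ ζ₀ ω) (rescaledD a₀ a₁ ζ₂ ω)
        (a₀ * a₁ * w) ((a₀ * a₁ * r * ω) ^ 2) = 0 := by
  have hω1' : ω ^ 2 - 1 ≠ 0 := sub_ne_zero.mpr hω1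
  rw [g1avg_eq_mul_rescaledG1 α₂ ζ₀ ζ₂ w ha₀ ha₁ hω hω1', mul_eq_zero_iff_left (by positivity)]

theorem g2avg_eq_zero_iff (ha₁ : a₁ ≠ 0) (hω : ω ≠ 0) :
    g2avg a₀ a₁ α₂ ζ₀ ζ₂ ω r w = 0 ↔
      rescaledG2 (rescaledB a₁ α₂ ζ₀ ω) (rescaledC a₁ α₂ ζ₀ ω)
        (a₀ * a₁ * w) ((a₀ * a₁ * r * ω) ^ 2) = 0 := by
  rw [g2avg_eq_mul_rescaledG2 α₂ ζ₀ ζ₂ w ha₁ hω, mul_eq_zero_iff_left (by positivity)]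

end Rescaling

/-- If `ā₀ ≠ 0`, `ā₁ ≠ 0`, `ω ≠ 0`, `ω² ≠ 1` and `ā₁ζ₀ < 0`, then there are at most three
values of `w` for which some `r > 0` satisfies `g₁(r,w) = g₂(r,w) = 0`; consequently at
most three limit cycles can bifurcate from the zero-Hopf equilibrium `p₋`. -/
theorem averaged_second_order_at_most_three (a₀ a₁ α₂ ζ₀ ζ₂ ω : ℝ)
    (ha₀ : a₀ ≠ 0) (ha₁ : a₁ ≠ 0) (hω : ω ≠ 0) (hω1 : ω ^ 2 ≠ 1) (hζ : a₁ * ζ₀ < 0) :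
    ∃ S : Finset ℝ, S.card ≤ 3 ∧
      ∀ w : ℝ, (∃ r > 0, g1avg a₀ a₁ α₂ ζ₀ ζ₂ ω r w = 0 ∧
        g2avg a₀ a₁ α₂ ζ₀ ζ₂ ω r w = 0) → w ∈ S := by
  let cubic := rescaledEliminant (rescaledB a₁ α₂ ζ₀ ω) (rescaledC a₁ α₂ ζ₀ ω)
    (rescaledD a₀ a₁ ζ₂ ω)
  refine ⟨cubic.roots.toFinset.image (· / (a₀ * a₁)),
    Finset.card_image_le.trans Cubic.card_roots_le, ?_⟩
  rintro w ⟨r, hr, hg₁, hg₂⟩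
  have root_mem : a₀ * a₁ * w ∈ cubic.roots :=
    mem_roots_rescaledEliminant ((g1avg_eq_zero_iff α₂ ζ₀ ζ₂ w ha₀ ha₁ hω hω1 hr.ne').mp hg₁)
      ((g2avg_eq_zero_iff α₂ ζ₀ ζ₂ w ha₁ hω).mp hg₂)
  exact Finset.mem_image.mpr ⟨a₀ * a₁ * w, Multiset.mem_toFinset.mpr root_mem,
    mul_div_cancel_left₀ w (mul_ne_zero ha₀ ha₁)⟩
end

section
/- There exist real numbers ā₀, ā₁, ζ₀, ζ₂, ω with ā₀ ≠ 0, ā₁ ≠ 0, ω ≠ 0, ω² ≠ 1 and ā₁·ζ₀ < 0 such that, taking α₂ = −6√(−ā₁ζ₀), the system of equations g₁(r,w) = 0, g₂(r,w) = 0 has at least three distinct solutions (r,w) ∈ ℝ² with r > 0 (one of them having w = 0 and the other two having opposite nonzero values of w). -/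
/-!
At `α₂ = -6s` the terms containing `α₂ + 6s` vanish and `2ā₁ζ₀ - α₂s = -4ā₁ζ₀`, so `g₁` is even and
`g₂` is odd in `w`, and both are polynomial in `ζ₀`. For `r > 0` the equation `g₁ = 0` is one affine
relation between `r²` and `w²`, while `g₂ = 0` says that `w = 0` or that a second such relation
holds. Instead of solving for `r` and `w`, prescribe radii `0 < r < r₀` for the solutions off and on
the axis `w = 0`: the relations are then linear in `w²`, `ζ₀`, `ζ₂`, and the inequality `r < r₀` is
exactly what makes `w²` positive.
-/

/-- `(r, w)` is a zero of the averaged system `(g₁, g₂)` at `α₂ = -6√(-ā₁ζ₀)`, the value of `α₂`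
for which the system is symmetric under `w ↦ -w`. The sign of `r` is not restricted. -/
def IsSymmetricZero (a₀ a₁ ζ₀ ζ₂ ω r w : ℝ) : Prop :=
  g1avg a₀ a₁ (-6 * √(-(a₁ * ζ₀))) ζ₀ ζ₂ ω r w = 0 ∧
    g2avg a₀ a₁ (-6 * √(-(a₁ * ζ₀))) ζ₀ ζ₂ ω r w = 0

section

variable {a₀ a₁ ζ₀ ζ₂ ω r w : ℝ}

theorem g1avg_symmetric (h : a₁ * ζ₀ ≤ 0) :
    g1avg a₀ a₁ (-6 * √(-(a₁ * ζ₀))) ζ₀ ζ₂ ω r w =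
      Real.pi * r / (4 * ω) * (4 * ζ₂ - a₀ * (ω ^ 2 - 1) / (a₁ * ω ^ 6) *
        (16 * (a₁ * ζ₀) * ω ^ 4 + 3 * a₀ ^ 2 * a₁ ^ 2 * (4 * w ^ 2 + 3 * r ^ 2 * ω ^ 2))) := by
  have sq_s : √(-(a₁ * ζ₀)) ^ 2 = -(a₁ * ζ₀) := Real.sq_sqrt (neg_nonneg.2 h)
  unfold g1avg
  linear_combination
    (Real.pi * r / (4 * ω)) * (a₀ * (ω ^ 2 - 1) / (a₁ * ω ^ 6)) * (24 * ω ^ 4) * sq_s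

theorem g2avg_symmetric (h : a₁ * ζ₀ ≤ 0) :
    g2avg a₀ a₁ (-6 * √(-(a₁ * ζ₀))) ζ₀ ζ₂ ω r w =
      -(a₀ * Real.pi / (a₁ * ω ^ 7)) * (w *
        (8 * (a₁ * ζ₀) * ω ^ 4 + a₀ ^ 2 * a₁ ^ 2 * (2 * w ^ 2 + 3 * r ^ 2 * ω ^ 2))) := by
  have sq_s : √(-(a₁ * ζ₀)) ^ 2 = -(a₁ * ζ₀) := Real.sq_sqrt (neg_nonneg.2 h)
  unfold g2avg
  linear_combination (a₀ * Real.pi / (2 * a₁ * ω ^ 7)) * (24 * w * ω ^ 4) * sq_s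

theorem g1avg_symmetric_eq_zero_iff (h : a₁ * ζ₀ < 0) (hω : ω ≠ 0) (hr : r ≠ 0) :
    g1avg a₀ a₁ (-6 * √(-(a₁ * ζ₀))) ζ₀ ζ₂ ω r w = 0 ↔
      4 * ζ₂ * ω ^ 6 = a₀ * (ω ^ 2 - 1) *
        (16 * ζ₀ * ω ^ 4 + 3 * a₀ ^ 2 * a₁ * (4 * w ^ 2 + 3 * r ^ 2 * ω ^ 2)) := by
  have ha₁ : a₁ ≠ 0 := left_ne_zero_of_mul h.ne
  have prefactor_ne_zero : Real.pi * r / (4 * ω) ≠ 0 := by positivity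
  rw [g1avg_symmetric h.le, mul_eq_zero, or_iff_right prefactor_ne_zero, sub_eq_zero]
  field_simp

theorem g2avg_symmetric_eq_zero_iff (h : a₁ * ζ₀ < 0) (ha₀ : a₀ ≠ 0) (hω : ω ≠ 0) :
    g2avg a₀ a₁ (-6 * √(-(a₁ * ζ₀))) ζ₀ ζ₂ ω r w = 0 ↔
      w = 0 ∨ 8 * ζ₀ * ω ^ 4 + a₀ ^ 2 * a₁ * (2 * w ^ 2 + 3 * r ^ 2 * ω ^ 2) = 0 := by
  have ha₁ : a₁ ≠ 0 := left_ne_zero_of_mul h.ne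
  have prefactor_ne_zero : -(a₀ * Real.pi / (a₁ * ω ^ 7)) ≠ 0 := neg_ne_zero.2 (by positivity)
  have factor_a₁ : 8 * (a₁ * ζ₀) * ω ^ 4 + a₀ ^ 2 * a₁ ^ 2 * (2 * w ^ 2 + 3 * r ^ 2 * ω ^ 2) =
      a₁ * (8 * ζ₀ * ω ^ 4 + a₀ ^ 2 * a₁ * (2 * w ^ 2 + 3 * r ^ 2 * ω ^ 2)) := by ring
  rw [g2avg_symmetric h.le, mul_eq_zero, or_iff_right prefactor_ne_zero, mul_eq_zero, factor_a₁,
    mul_eq_zero, or_iff_right ha₁]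

theorem isSymmetricZero_iff (h : a₁ * ζ₀ < 0) (ha₀ : a₀ ≠ 0) (hω : ω ≠ 0) (hr : r ≠ 0) :
    IsSymmetricZero a₀ a₁ ζ₀ ζ₂ ω r w ↔
      4 * ζ₂ * ω ^ 6 = a₀ * (ω ^ 2 - 1) *
        (16 * ζ₀ * ω ^ 4 + 3 * a₀ ^ 2 * a₁ * (4 * w ^ 2 + 3 * r ^ 2 * ω ^ 2)) ∧
      (w = 0 ∨ 8 * ζ₀ * ω ^ 4 + a₀ ^ 2 * a₁ * (2 * w ^ 2 + 3 * r ^ 2 * ω ^ 2) = 0) :=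
  and_congr (g1avg_symmetric_eq_zero_iff h hω hr) (g2avg_symmetric_eq_zero_iff h ha₀ hω)

theorem IsSymmetricZero.neg (hz : IsSymmetricZero a₀ a₁ ζ₀ ζ₂ ω r w) :
    IsSymmetricZero a₀ a₁ ζ₀ ζ₂ ω r (-w) := by
  obtain ⟨h₁, h₂⟩ := hz
  unfold g1avg at h₁
  unfold g2avg at h₂
  constructor
  · unfold g1avg
    linear_combination h₁
  · unfold g2avg
    linear_combination -h₂

end

theorem averaged_second_order_three_solutions_general {a₀ a₁ ω r₀ r : ℝ} (ha₀ : a₀ ≠ 0)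
    (ha₁ : a₁ ≠ 0) (hω : ω ≠ 0) (hr : 0 < r) (hr₀ : r < r₀) :
    ∃ ζ₀ ζ₂ w : ℝ, a₁ * ζ₀ < 0 ∧ w ≠ 0 ∧ IsSymmetricZero a₀ a₁ ζ₀ ζ₂ ω r₀ 0 ∧
      IsSymmetricZero a₀ a₁ ζ₀ ζ₂ ω r w ∧ IsSymmetricZero a₀ a₁ ζ₀ ζ₂ ω r (-w) := by
  have hr₀_pos : 0 < r₀ := hr.trans hr₀
  have gap_pos : 0 < r₀ ^ 2 - r ^ 2 := sub_pos.2 (by gcongr)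
  obtain ⟨w, hw, sq_w⟩ : ∃ w : ℝ, w ≠ 0 ∧ w ^ 2 = 3 / 4 * ω ^ 2 * (r₀ ^ 2 - r ^ 2) :=
    ⟨√(3 / 4 * ω ^ 2 * (r₀ ^ 2 - r ^ 2)), by positivity, Real.sq_sqrt (by positivity)⟩
  obtain ⟨ζ₀, hζ₀⟩ : ∃ ζ₀ : ℝ, ζ₀ * ω ^ 2 = -(3 / 16 * a₀ ^ 2 * a₁ * (r₀ ^ 2 + r ^ 2)) :=
    ⟨_, div_mul_cancel₀ _ (by positivity)⟩
  obtain ⟨ζ₂, hζ₂⟩ : ∃ ζ₂ : ℝ,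
      ζ₂ * ω ^ 4 = 3 / 4 * a₀ ^ 3 * a₁ * (ω ^ 2 - 1) * (2 * r₀ ^ 2 - r ^ 2) :=
    ⟨_, div_mul_cancel₀ _ (by positivity)⟩
  have hneg : a₁ * ζ₀ < 0 := by
    have : 0 < 3 / 16 * a₀ ^ 2 * a₁ ^ 2 * (r₀ ^ 2 + r ^ 2) := by positivity
    refine neg_of_mul_neg_left (b := ω ^ 2) ?_ (by positivity)
    linear_combination this + a₁ * hζ₀
  have zero_on_axis : IsSymmetricZero a₀ a₁ ζ₀ ζ₂ ω r₀ 0 := by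
    refine (isSymmetricZero_iff hneg ha₀ hω hr₀_pos.ne').2 ⟨?_, .inl rfl⟩
    linear_combination 4 * ω ^ 2 * hζ₂ - 16 * a₀ * (ω ^ 2 - 1) * ω ^ 2 * hζ₀
  have zero_off_axis : IsSymmetricZero a₀ a₁ ζ₀ ζ₂ ω r w := by
    refine (isSymmetricZero_iff hneg ha₀ hω hr.ne').2 ⟨?_, .inr ?_⟩
    · linear_combination 4 * ω ^ 2 * hζ₂ - 16 * a₀ * (ω ^ 2 - 1) * ω ^ 2 * hζ₀
        - 12 * a₀ ^ 3 * a₁ * (ω ^ 2 - 1) * sq_w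
    · linear_combination 8 * ω ^ 2 * hζ₀ + 2 * a₀ ^ 2 * a₁ * sq_w
  exact ⟨ζ₀, ζ₂, w, hneg, hw, zero_on_axis, zero_off_axis, zero_off_axis.neg⟩

/-- There are parameter values `ā₀ ≠ 0`, `ā₁ ≠ 0`, `ω ≠ 0`, `ω² ≠ 1`, `ā₁ζ₀ < 0` such
that, taking `α₂ = −6√(−ā₁ζ₀)`, the system `g₁(r,w) = g₂(r,w) = 0` has at least three
distinct solutions with `r > 0`: one with `w = 0` and two with opposite nonzero values
of `w`. -/
theorem averaged_second_order_three_solutions :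
    ∃ a₀ a₁ ζ₀ ζ₂ ω : ℝ, a₀ ≠ 0 ∧ a₁ ≠ 0 ∧ ω ≠ 0 ∧ ω ^ 2 ≠ 1 ∧ a₁ * ζ₀ < 0 ∧
      ∃ r₀ r w : ℝ, 0 < r₀ ∧ 0 < r ∧ w ≠ 0 ∧
        g1avg a₀ a₁ (-6 * Real.sqrt (-(a₁ * ζ₀))) ζ₀ ζ₂ ω r₀ 0 = 0 ∧
        g2avg a₀ a₁ (-6 * Real.sqrt (-(a₁ * ζ₀))) ζ₀ ζ₂ ω r₀ 0 = 0 ∧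
        g1avg a₀ a₁ (-6 * Real.sqrt (-(a₁ * ζ₀))) ζ₀ ζ₂ ω r w = 0 ∧
        g2avg a₀ a₁ (-6 * Real.sqrt (-(a₁ * ζ₀))) ζ₀ ζ₂ ω r w = 0 ∧
        g1avg a₀ a₁ (-6 * Real.sqrt (-(a₁ * ζ₀))) ζ₀ ζ₂ ω r (-w) = 0 ∧
        g2avg a₀ a₁ (-6 * Real.sqrt (-(a₁ * ζ₀))) ζ₀ ζ₂ ω r (-w) = 0 := by
  obtain ⟨ζ₀, ζ₂, w, hneg, hw, ⟨h₁, h₂⟩, ⟨h₃, h₄⟩, ⟨h₅, h₆⟩⟩ :=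
    averaged_second_order_three_solutions_general (a₀ := 1) (a₁ := 1) (ω := 2) (r₀ := 2) (r := 1)
      one_ne_zero one_ne_zero two_ne_zero one_pos one_lt_two
  exact ⟨1, 1, ζ₀, ζ₂, 2, one_ne_zero, one_ne_zero, two_ne_zero, by norm_num, hneg,
    2, 1, w, two_pos, one_pos, hw, h₁, h₂, h₃, h₄, h₅, h₆⟩
end

section
/- (First-order averaging.) Let Ω ⊆ ℝⁿ be open, T > 0, ε₀ > 0, and let f : ℝ × Ω → ℝⁿ and g : ℝ × Ω × (0, ε₀] → ℝⁿ be T-periodic in the first variable, with f twice continuously differentiable in x and g continuously differentiable in x, and f, ∂f/∂x, ∂²f/∂x², g, ∂g/∂x continuous and bounded uniformly in ε. Define the averaged function f⁰(y) = (1/T)·∫₀ᵀ f(t,y) dt. Suppose p ∈ Ω satisfies f⁰(p) = 0 and det( (∂f⁰/∂y)(p) ) ≠ 0. Then there exists ε₁ ∈ (0, ε₀] such that for every ε ∈ (0, ε₁) the differential equation ẋ = ε·f(t,x) + ε²·g(t,x,ε) has a T-periodic solution φ(·, ε), and φ(0, ε) → p as ε → 0. -/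
/-!
Let `x` be the solution of `ẋ = ε f + ε² g` on `[0, T]` with `x 0 = a`. The scaled displacement
`(x T - a) / (ε T)` is the mean of `f + ε g` along `x`. Solutions drift from their initial value by
`O(ε)`, and by Grönwall the drift is `O(ε)`-Lipschitz in `a`; a bound on the second differences of
`f` then makes the scaled displacement minus the averaged field `f⁰` both `O(ε)` and
`O(ε)`-Lipschitz in `a`. Averaging preserves the bound on second differences, and this bound makes
`f⁰` strictly differentiable at `p`. So near `p` the scaled displacement is a Lipschitz-small
perturbation of the invertible derivative of `f⁰`, and the quantitative inverse function theorem
gives it a zero within `O(ε)` of `p`. The solution starting there closes up after time `T` and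
extends periodically.
-/

open Set Metric MeasureTheory Filter Topology
open scoped NNReal Interval

section IntervalAverage

variable {E : Type*} [NormedAddCommGroup E] [NormedSpace ℝ E] {a b : ℝ}

theorem norm_interval_average_le_of_norm_le_const {f : ℝ → E} {C : ℝ} (hab : a ≠ b)
    (hf : ∀ t ∈ Ι a b, ‖f t‖ ≤ C) : ‖⨍ t in a..b, f t‖ ≤ C := by
  have hlen : 0 < |b - a| := abs_pos.2 (sub_ne_zero.2 hab.symm)
  rw [interval_average_eq, norm_smul, norm_inv, Real.norm_eq_abs, inv_mul_le_iff₀ hlen, mul_comm]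
  exact intervalIntegral.norm_integral_le_of_norm_le_const hf

theorem interval_average_sub {f g : ℝ → E} (hf : IntervalIntegrable f volume a b)
    (hg : IntervalIntegrable g volume a b) :
    ⨍ t in a..b, (f t - g t) = (⨍ t in a..b, f t) - ⨍ t in a..b, g t := by
  simp only [interval_average_eq, intervalIntegral.integral_sub hf hg, smul_sub]

end IntervalAverage

section LipschitzIncrements

variable {E F : Type*} [NormedAddCommGroup E] [NormedAddCommGroup F]

/-- The increments `h (· + u) - h` are `C * ‖u‖`-Lipschitz on `s`: a bound on second differences
that replaces a bound on the second derivative of `h`, and, unlike the latter, passes to averages of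
`h` over a parameter without differentiating under the integral sign. -/
def LipschitzIncrementsOn (C : ℝ≥0) (h : E → F) (s : Set E) : Prop :=
  ∀ ⦃a b u : E⦄, a ∈ s → b ∈ s → a + u ∈ s → b + u ∈ s →
    ‖h (a + u) - h (b + u) - (h a - h b)‖ ≤ C * ‖u‖ * ‖a - b‖

variable {C : ℝ≥0} {h : E → F} {s : Set E}

namespace LipschitzIncrementsOn

-- Translate both `a` and `b` by `x - a`; the Lipschitz bound absorbs the mismatch with `y - b`.
theorem norm_sub_sub_sub_le (hh : LipschitzIncrementsOn C h s) (hlip : LipschitzOnWith C h s)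
    {a b x y : E} (ha : a ∈ s) (hb : b ∈ s) (hx : x ∈ s) (hy : y ∈ s) (hbx : b + (x - a) ∈ s) :
    ‖h x - h y - (h a - h b)‖ ≤ C * ‖x - a‖ * ‖a - b‖ + C * ‖x - a - (y - b)‖ := by
  have hincrement := hh ha hb (u := x - a) (by simpa) hbx
  have hshift := hlip.norm_sub_le hbx hy
  rw [add_sub_cancel] at hincrement
  rw [show b + (x - a) - y = x - a - (y - b) by abel] at hshift
  calc ‖h x - h y - (h a - h b)‖
      = ‖(h x - h (b + (x - a)) - (h a - h b)) + (h (b + (x - a)) - h y)‖ := by congr 1; abel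
    _ ≤ _ := norm_add_le_of_le hincrement hshift

variable [NormedSpace ℝ F]

theorem interval_average {f : ℝ → E → F} {α β : ℝ} (hαβ : α ≠ β)
    (hf : ∀ t, LipschitzIncrementsOn C (f t) s)
    (hint : ∀ x ∈ s, IntervalIntegrable (fun t => f t x) volume α β) :
    LipschitzIncrementsOn C (fun x => ⨍ t in α..β, f t x) s := by
  intro a b u ha hb hau hbu
  rw [← interval_average_sub (hint _ hau) (hint _ hbu), ← interval_average_sub (hint a ha)
    (hint b hb), ← interval_average_sub ((hint _ hau).sub (hint _ hbu))
    ((hint a ha).sub (hint b hb))]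
  exact norm_interval_average_le_of_norm_le_const hαβ fun t _ => hf t ha hb hau hbu

variable [NormedSpace ℝ E]

theorem of_lipschitzOnWith_fderiv (hs : Convex ℝ s)
    (hh : ∀ x ∈ s, DifferentiableAt ℝ h x) (hC : LipschitzOnWith C (fderiv ℝ h) s) :
    LipschitzIncrementsOn C h s := by
  intro a b u ha hb hau hbu
  have hconvex : Convex ℝ (s ∩ (fun x => x + u) ⁻¹' s) :=
    hs.inter (hs.translate_preimage_left u)
  have hderiv : ∀ x ∈ s ∩ (fun x => x + u) ⁻¹' s,
      HasFDerivWithinAt (fun x => h (x + u) - h x) (fderiv ℝ h (x + u) - fderiv ℝ h x)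
        (s ∩ (fun x => x + u) ⁻¹' s) x := fun x ⟨hx, hxu⟩ =>
    (((hasFDerivAt_comp_add_right u).2 (hh _ hxu).hasFDerivAt).sub
      (hh x hx).hasFDerivAt).hasFDerivWithinAt
  have hbound : ∀ x ∈ s ∩ (fun x => x + u) ⁻¹' s,
      ‖fderiv ℝ h (x + u) - fderiv ℝ h x‖ ≤ C * ‖u‖ := fun x ⟨hx, hxu⟩ => by
    simpa using hC.norm_sub_le hxu hx
  rw [sub_sub_sub_comm]
  exact hconvex.norm_image_sub_le_of_norm_hasFDerivWithin_le hderiv hbound ⟨hb, hbu⟩ ⟨ha, hau⟩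

theorem of_norm_fderiv_fderiv_le (hs : Convex ℝ s) (hh : ∀ x ∈ s, DifferentiableAt ℝ h x)
    (hh' : ∀ x ∈ s, DifferentiableAt ℝ (fderiv ℝ h) x)
    (hC : ∀ x ∈ s, ‖fderiv ℝ (fderiv ℝ h) x‖ ≤ C) : LipschitzIncrementsOn C h s :=
  of_lipschitzOnWith_fderiv hs hh (hs.lipschitzOnWith_of_nnnorm_fderiv_le hh' hC)

-- Compare the increment of `h` over `[b, a]` with the one over the translate `[p, p + (a - b)]`.
theorem hasStrictFDerivAt {A : E →L[ℝ] F} {p : E} (hh : LipschitzIncrementsOn C h s)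
    (hs : s ∈ 𝓝 p) (hA : HasFDerivAt h A p) : HasStrictFDerivAt h A p := by
  have hfst : Tendsto (fun q : E × E => q.1) (𝓝 (p, p)) (𝓝 p) := continuous_fst.tendsto _
  have hsnd : Tendsto (fun q : E × E => q.2) (𝓝 (p, p)) (𝓝 p) := continuous_snd.tendsto _
  have hdiff : Tendsto (fun q : E × E => q.1 - q.2) (𝓝 (p, p)) (𝓝 0) := by
    simpa using hfst.sub hsnd
  have htranslate : (fun q : E × E => h (p + (q.1 - q.2)) - h p - A (q.1 - q.2))
      =o[𝓝 (p, p)] fun q => q.1 - q.2 :=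
    (hasFDerivAt_iff_isLittleO_nhds_zero.1 hA).comp_tendsto hdiff
  have hincrement : (fun q : E × E => h q.1 - h q.2 - (h (p + (q.1 - q.2)) - h p))
      =o[𝓝 (p, p)] fun q => q.1 - q.2 := by
    have hsmall : Tendsto (fun q : E × E => C * ‖q.2 - p‖) (𝓝 (p, p)) (𝓝 0) := by
      simpa using (hsnd.sub_const p).norm.const_mul (C : ℝ)
    have hmem : ∀ᶠ q : E × E in 𝓝 (p, p), p + (q.1 - q.2) ∈ s :=
      (by simpa using hdiff.const_add p : Tendsto _ _ (𝓝 p)).eventually_mem hs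
    refine Asymptotics.IsLittleO.of_bound fun θ hθ => ?_
    filter_upwards [hfst hs, hsnd hs, hmem, hsmall.eventually_le_const hθ]
      with q hq₁ hq₂ hq hθq
    have hfst_eq : p + (q.1 - q.2) + (q.2 - p) = q.1 := by abel
    have hsnd_eq : p + (q.2 - p) = q.2 := by abel
    have hle := hh hq (mem_of_mem_nhds hs) (by rwa [hfst_eq]) (by rwa [hsnd_eq])
    rw [hfst_eq, hsnd_eq, add_sub_cancel_left] at hle
    exact hle.trans (by gcongr)
  refine .of_isLittleO ((hincrement.add htranslate).congr_left fun q => ?_)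
  abel

end LipschitzIncrementsOn

end LipschitzIncrements

section BoundedLipschitz

variable {E : Type*} [NormedAddCommGroup E]

/-- A time-dependent vector field that is jointly continuous on `ℝ × s` and, at each time, bounded
by `C` and `C`-Lipschitz on `s`. The two bounds share one constant because only its order in the
small parameter of the averaging problem matters. -/
structure IsBoundedLipschitzOn (v : ℝ → E → E) (s : Set E) (C : ℝ≥0) : Prop where
  continuousOn : ContinuousOn (Function.uncurry v) (univ ×ˢ s)
  norm_le : ∀ t, ∀ x ∈ s, ‖v t x‖ ≤ C
  lipschitzOnWith : ∀ t, LipschitzOnWith C (v t) s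

namespace IsBoundedLipschitzOn

variable {v w : ℝ → E → E} {s : Set E} {C D : ℝ≥0}

theorem add (hv : IsBoundedLipschitzOn v s C) (hw : IsBoundedLipschitzOn w s D) :
    IsBoundedLipschitzOn (v + w) s (C + D) where
  continuousOn := hv.continuousOn.add hw.continuousOn
  norm_le t x hx := norm_add_le_of_le (hv.norm_le t x hx) (hw.norm_le t x hx)
  lipschitzOnWith t := (hv.lipschitzOnWith t).add (hw.lipschitzOnWith t)

theorem continuousOn_comp {x : ℝ → E} {u : Set ℝ} (hv : IsBoundedLipschitzOn v s C)
    (hx : ContinuousOn x u) (hxs : MapsTo x u s) : ContinuousOn (fun t => v t (x t)) u :=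
  hv.continuousOn.comp (continuousOn_id.prodMk hx) fun _ ht => ⟨mem_univ _, hxs ht⟩

theorem intervalIntegrable_const (hv : IsBoundedLipschitzOn v s C) {x : E} (hx : x ∈ s) (a b : ℝ) :
    IntervalIntegrable (fun t => v t x) volume a b :=
  (hv.continuousOn_comp continuousOn_const fun _ _ => hx).intervalIntegrable

variable [NormedSpace ℝ E]

theorem const_smul (hv : IsBoundedLipschitzOn v s C) (c : ℝ) :
    IsBoundedLipschitzOn (c • v) s (‖c‖₊ * C) where
  continuousOn := hv.continuousOn.const_smul c
  norm_le t x hx := by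
    rw [NNReal.coe_mul, coe_nnnorm]
    exact (norm_smul_le c _).trans (by gcongr; exact hv.norm_le t x hx)
  lipschitzOnWith t := (lipschitzWith_smul c).comp_lipschitzOnWith (hv.lipschitzOnWith t)

theorem of_norm_fderiv_le (hs : Convex ℝ s)
    (hcont : ContinuousOn (Function.uncurry v) (univ ×ˢ s)) (hnorm : ∀ t, ∀ x ∈ s, ‖v t x‖ ≤ C)
    (hdiff : ∀ t, ∀ x ∈ s, DifferentiableAt ℝ (v t) x)
    (hfderiv : ∀ t, ∀ x ∈ s, ‖fderiv ℝ (v t) x‖ ≤ C) : IsBoundedLipschitzOn v s C where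
  continuousOn := hcont
  norm_le := hnorm
  lipschitzOnWith t := hs.lipschitzOnWith_of_nnnorm_fderiv_le (hdiff t) (hfderiv t)

end IsBoundedLipschitzOn

end BoundedLipschitz

section ConfinedIntegralCurve

variable {E : Type*} [NormedAddCommGroup E] [NormedSpace ℝ E] {v : ℝ → E → E} {s : Set E} {T : ℝ}
  {M : ℝ≥0} {x y : ℝ → E} {t : ℝ}

/-- A solution of `ẋ = v(t, x)` on `[0, T]` with values in `s`, the set on which bounds on `v` are
available; the derivatives at the end points are one-sided. -/
structure IsConfinedIntegralCurve (x : ℝ → E) (v : ℝ → E → E) (s : Set E) (T : ℝ) : Prop where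
  isIntegralCurveOn : IsIntegralCurveOn x v (Icc 0 T)
  mapsTo : MapsTo x (Icc 0 T) s

namespace IsConfinedIntegralCurve

theorem exists_of_mem_closedBall [CompleteSpace E] {p a : E} {ρ r : ℝ}
    (hv : IsBoundedLipschitzOn v (closedBall p ρ) M) (hT : 0 ≤ T) (hMT : M * T ≤ ρ - r)
    (ha : a ∈ closedBall p r) :
    ∃ x : ℝ → E, IsConfinedIntegralCurve x v (closedBall p ρ) T ∧ x 0 = a := by
  lift r to ℝ≥0 using nonempty_closedBall.1 ⟨a, ha⟩
  lift ρ to ℝ≥0 using by linarith [mul_nonneg M.coe_nonneg hT, r.coe_nonneg]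
  have h0 : (0 : ℝ) ∈ Icc 0 T := ⟨le_rfl, hT⟩
  have hPL : IsPicardLindelof v (⟨0, h0⟩ : Icc 0 T) p ρ r M M :=
    { lipschitzOnWith t _ := hv.lipschitzOnWith t
      continuousOn x hx := hv.continuousOn_comp continuousOn_const fun _ _ => hx
      norm_le t _ x hx := hv.norm_le t x hx
      mul_max_le := by simpa [hT] using hMT }
  obtain ⟨x, hfixed⟩ := ODE.FunSpace.exists_isFixedPt_next hPL ha
  have hpicard : EqOn x.compProj (ODE.picard v 0 a x.compProj) (Icc 0 T) := fun t ht => by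
    rw [ODE.FunSpace.compProj_of_mem ht]
    exact (ODE.FunSpace.isFixedPt_next_iff hPL ha).1 hfixed ⟨t, ht⟩
  have hmem : MapsTo x.compProj (Icc 0 T) (closedBall p ρ) := fun _ _ =>
    x.compProj_mem_closedBall hPL.mul_max_le
  refine ⟨x.compProj, ⟨fun t ht => ?_, hmem⟩, by rw [hpicard h0, ODE.picard_apply₀]⟩
  exact (ODE.hasDerivWithinAt_picard_Icc h0 (hv.continuousOn.mono (prod_mono_left (subset_univ _)))
    x.continuous_compProj.continuousOn hmem a ht).congr_of_mem hpicard ht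

theorem hasDerivWithinAt_Ici (hx : IsConfinedIntegralCurve x v s T) (ht : t ∈ Ico 0 T) :
    HasDerivWithinAt x (v t (x t)) (Ici t) t :=
  (hx.isIntegralCurveOn t (Ico_subset_Icc_self ht)).mono_of_mem_nhdsWithin
    (Icc_mem_nhdsGE_of_mem ht)

theorem intervalIntegrable {w : ℝ → E → E} {C : ℝ≥0} (hx : IsConfinedIntegralCurve x v s T)
    (hw : IsBoundedLipschitzOn w s C) (hT : 0 ≤ T) :
    IntervalIntegrable (fun t => w t (x t)) volume 0 T := by
  have hcont := hw.continuousOn_comp hx.isIntegralCurveOn.continuousOn hx.mapsTo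
  exact ContinuousOn.intervalIntegrable (by rwa [uIcc_of_le hT])

theorem sub_eq_integral [CompleteSpace E] (hx : IsConfinedIntegralCurve x v s T)
    (hv : IsBoundedLipschitzOn v s M) (hT : 0 ≤ T) : x T - x 0 = ∫ t in (0 : ℝ)..T, v t (x t) :=
  (intervalIntegral.integral_eq_sub_of_hasDeriv_right_of_le hT hx.isIntegralCurveOn.continuousOn
    (fun _ ht => (hx.hasDerivWithinAt_Ici (Ioo_subset_Ico_self ht)).Ioi_of_Ici)
    (hx.intervalIntegrable hv hT)).symm

theorem norm_sub_initial_le (hx : IsConfinedIntegralCurve x v s T)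
    (hv : IsBoundedLipschitzOn v s M) (ht : t ∈ Icc 0 T) : ‖x t - x 0‖ ≤ M * T :=
  calc ‖x t - x 0‖
      ≤ M * (t - 0) := norm_image_sub_le_of_norm_deriv_le_segment' hx.isIntegralCurveOn
        (fun τ hτ => hv.norm_le τ _ (hx.mapsTo (Ico_subset_Icc_self hτ))) t ht
    _ ≤ M * T := by gcongr; linarith [ht.2]

theorem norm_sub_le (hx : IsConfinedIntegralCurve x v s T) (hy : IsConfinedIntegralCurve y v s T)
    (hv : IsBoundedLipschitzOn v s M) (ht : t ∈ Icc 0 T) :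
    ‖x t - y t‖ ≤ Real.exp (M * T) * ‖x 0 - y 0‖ := by
  have hgronwall := dist_le_of_trajectories_ODE_of_mem (fun τ _ => hv.lipschitzOnWith τ)
    hx.isIntegralCurveOn.continuousOn (fun _ => hx.hasDerivWithinAt_Ici)
    (fun _ hτ => hx.mapsTo (Ico_subset_Icc_self hτ))
    hy.isIntegralCurveOn.continuousOn (fun _ => hy.hasDerivWithinAt_Ici)
    (fun _ hτ => hy.mapsTo (Ico_subset_Icc_self hτ)) le_rfl t ht
  rw [dist_eq_norm, dist_eq_norm, mul_comm] at hgronwall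
  refine hgronwall.trans ?_
  gcongr
  linarith [ht.2]

theorem norm_sub_initial_sub_le (hx : IsConfinedIntegralCurve x v s T)
    (hy : IsConfinedIntegralCurve y v s T) (hv : IsBoundedLipschitzOn v s M) (ht : t ∈ Icc 0 T) :
    ‖x t - x 0 - (y t - y 0)‖ ≤ M * T * Real.exp (M * T) * ‖x 0 - y 0‖ := by
  have hderiv : ∀ τ ∈ Ico 0 T,
      ‖v τ (x τ) - v τ (y τ)‖ ≤ M * (Real.exp (M * T) * ‖x 0 - y 0‖) := fun τ hτ => by
    have hτ' := Ico_subset_Icc_self hτ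
    refine ((hv.lipschitzOnWith τ).norm_sub_le (hx.mapsTo hτ') (hy.mapsTo hτ')).trans ?_
    gcongr
    exact hx.norm_sub_le hy hv hτ'
  calc ‖x t - x 0 - (y t - y 0)‖
      = ‖(x - y) t - (x - y) 0‖ := by rw [sub_sub_sub_comm]; rfl
    _ ≤ M * (Real.exp (M * T) * ‖x 0 - y 0‖) * (t - 0) :=
        norm_image_sub_le_of_norm_deriv_le_segment'
          (fun τ hτ => (hx.isIntegralCurveOn τ hτ).sub (hy.isIntegralCurveOn τ hτ)) hderiv t ht
    _ ≤ M * (Real.exp (M * T) * ‖x 0 - y 0‖) * T := by gcongr; linarith [ht.2]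
    _ = M * T * Real.exp (M * T) * ‖x 0 - y 0‖ := by ring

end IsConfinedIntegralCurve

end ConfinedIntegralCurve

section PeriodicExtension

variable {E : Type*} {T : ℝ}

/-- The `T`-periodic function on `ℝ` that agrees with `x` on `[0, T)`. It turns a solution over one
period with `x T = x 0` into a periodic solution; the value `x T` itself is discarded. -/
noncomputable def periodicExtension (hT : 0 < T) (x : ℝ → E) : ℝ → E :=
  fun t => x (toIcoMod hT 0 t)

variable {x : ℝ → E}

theorem periodic_periodicExtension (hT : 0 < T) (x : ℝ → E) :
    Function.Periodic (periodicExtension hT x) T :=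
  (toIcoMod_periodic hT 0).comp x

theorem periodicExtension_zero (hT : 0 < T) (x : ℝ → E) : periodicExtension hT x 0 = x 0 :=
  congrArg x (toIcoMod_apply_left hT 0)

theorem periodicExtension_mem {s : Set E} (hT : 0 < T) (hx : MapsTo x (Icc 0 T) s) (t : ℝ) :
    periodicExtension hT x t ∈ s :=
  hx (Ico_subset_Icc_self (toIcoMod_mem_Ico' hT t))

theorem periodicExtension_eqOn (hT : 0 < T) (hclosed : x T = x 0) (k : ℤ) :
    EqOn (periodicExtension hT x) (x ∘ (· - k • T)) (Icc (k • T) (k • T + T)) := by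
  intro t ht
  rcases ht.2.lt_or_eq with hlt | rfl
  · refine congrArg x ((toIcoMod_eq_iff hT).2 ⟨⟨sub_nonneg.2 ht.1, ?_⟩, k, by simp⟩)
    linarith
  · rw [(periodic_periodicExtension hT x) (k • T),
      ← zero_add (k • T), (periodic_periodicExtension hT x).zsmul k 0, periodicExtension_zero]
    simp [hclosed]

variable [NormedAddCommGroup E] [NormedSpace ℝ E] {v : ℝ → E → E}

theorem isIntegralCurveOn_periodicExtension (hT : 0 < T) (hv : Function.Periodic v T)
    (hx : IsIntegralCurveOn x v (Icc 0 T)) (hclosed : x T = x 0) (k : ℤ) :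
    IsIntegralCurveOn (periodicExtension hT x) v (Icc (k • T) (k • T + T)) := by
  have hv_shift : v ∘ (· - k • T) = v := funext fun _ => hv.sub_zsmul_eq k
  have hshift := hx.comp_sub (k • T)
  rw [hv_shift, ← image_vadd, image_congr fun _ _ => vadd_eq_add _ _, image_const_add_Icc,
    add_zero] at hshift
  intro t ht
  have heq := periodicExtension_eqOn hT hclosed k
  rw [heq ht]
  exact (hshift t ht).congr_of_mem heq ht

theorem isIntegralCurve_periodicExtension (hT : 0 < T) (hv : Function.Periodic v T)
    (hx : IsIntegralCurveOn x v (Icc 0 T)) (hclosed : x T = x 0) :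
    IsIntegralCurve (periodicExtension hT x) v := by
  intro t
  have hpiece := isIntegralCurveOn_periodicExtension hT hv hx hclosed
  have hright : HasDerivWithinAt (periodicExtension hT x) (v t (periodicExtension hT x t))
      (Ici t) t := by
    have hmem := sub_toIcoDiv_zsmul_mem_Ico hT 0 t
    have ht : t ∈ Ico (toIcoDiv hT 0 t • T) (toIcoDiv hT 0 t • T + T) :=
      ⟨by linarith [hmem.1], by linarith [hmem.2]⟩
    exact (hpiece _ t (Ico_subset_Icc_self ht)).mono_of_mem_nhdsWithin (Icc_mem_nhdsGE_of_mem ht)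
  have hleft : HasDerivWithinAt (periodicExtension hT x) (v t (periodicExtension hT x t))
      (Iic t) t := by
    have hmem := sub_toIocDiv_zsmul_mem_Ioc hT 0 t
    have ht : t ∈ Ioc (toIocDiv hT 0 t • T) (toIocDiv hT 0 t • T + T) :=
      ⟨by linarith [hmem.1], by linarith [hmem.2]⟩
    exact (hpiece _ t (Ioc_subset_Icc_self ht)).mono_of_mem_nhdsWithin (Icc_mem_nhdsLE_of_mem ht)
  simpa only [Iic_union_Ici, hasDerivWithinAt_univ] using hleft.union hright

end PeriodicExtension

section ScaledDisplacement

variable {E : Type*} [NormedAddCommGroup E] [NormedSpace ℝ E] {f g v : ℝ → E → E} {s : Set E}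
  {p : E} {ρ r T ε : ℝ} {C M : ℝ≥0} {x y : ℝ → E}

/-- The mean over `[0, T]` of `f + ε g` along the curve `x`. For a solution of `ẋ = ε f + ε² g` it
is the displacement `x T - x 0` divided by `ε T`, which stays meaningful as `ε → 0`. -/
noncomputable def scaledDisplacement (T ε : ℝ) (f g : ℝ → E → E) (x : ℝ → E) : E :=
  ⨍ t in (0 : ℝ)..T, (f t (x t) + ε • g t (x t))

theorem sub_eq_smul_scaledDisplacement [CompleteSpace E] (hT : 0 < T)
    (hx : IsConfinedIntegralCurve x (ε • f + ε ^ 2 • g) s T)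
    (hfg : IsBoundedLipschitzOn (ε • f + ε ^ 2 • g) s M) :
    x T - x 0 = (ε * T) • scaledDisplacement T ε f g x := by
  have hfactor : ∀ t, (ε • f + ε ^ 2 • g) t (x t) = ε • (f t (x t) + ε • g t (x t)) := fun t => by
    rw [smul_add, smul_smul, ← sq]
    rfl
  rw [hx.sub_eq_integral hfg hT.le, scaledDisplacement, interval_average_eq, sub_zero, smul_smul,
    mul_assoc, mul_inv_cancel₀ hT.ne', mul_one]
  simp only [hfactor, intervalIntegral.integral_smul]

theorem intervalIntegrable_scaledDisplacement_integrand (hf : IsBoundedLipschitzOn f s C)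
    (hg : IsBoundedLipschitzOn g s C) (hx : IsConfinedIntegralCurve x v s T) (hT : 0 ≤ T) :
    IntervalIntegrable (fun t => f t (x t) + ε • g t (x t)) volume 0 T :=
  (hx.intervalIntegrable hf hT).add ((hx.intervalIntegrable hg hT).smul ε)

theorem norm_scaledDisplacement_sub_average_le (hf : IsBoundedLipschitzOn f s C)
    (hg : IsBoundedLipschitzOn g s C) (hv : IsBoundedLipschitzOn v s M)
    (hx : IsConfinedIntegralCurve x v s T) (hT : 0 < T) :
    ‖scaledDisplacement T ε f g x - ⨍ t in (0 : ℝ)..T, f t (x 0)‖ ≤ C * (M * T) + |ε| * C := by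
  have h0 : x 0 ∈ s := hx.mapsTo ⟨le_rfl, hT.le⟩
  rw [scaledDisplacement, ← interval_average_sub
    (intervalIntegrable_scaledDisplacement_integrand hf hg hx hT.le)
    (hf.intervalIntegrable_const h0 0 T)]
  refine norm_interval_average_le_of_norm_le_const hT.ne fun t ht => ?_
  rw [uIoc_of_le hT.le] at ht
  have ht' := Ioc_subset_Icc_self ht
  rw [add_sub_right_comm]
  refine norm_add_le_of_le ?_ ?_
  · refine ((hf.lipschitzOnWith t).norm_sub_le (hx.mapsTo ht') h0).trans ?_
    gcongr
    exact hx.norm_sub_initial_le hv ht'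
  · rw [norm_smul, Real.norm_eq_abs]
    gcongr
    exact hg.norm_le t _ (hx.mapsTo ht')

theorem norm_scaledDisplacement_integrand_sub_sub_le
    (hf : IsBoundedLipschitzOn f (closedBall p ρ) C)
    (hf_incr : ∀ t, LipschitzIncrementsOn C (f t) (closedBall p ρ))
    (hg : IsBoundedLipschitzOn g (closedBall p ρ) C)
    (hv : IsBoundedLipschitzOn v (closedBall p ρ) M) (hMT : M * T ≤ ρ - r)
    (hx : IsConfinedIntegralCurve x v (closedBall p ρ) T)
    (hy : IsConfinedIntegralCurve y v (closedBall p ρ) T) (hy0 : y 0 ∈ closedBall p r) {t : ℝ}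
    (ht : t ∈ Icc 0 T) :
    ‖f t (x t) + ε • g t (x t) - (f t (y t) + ε • g t (y t)) - (f t (x 0) - f t (y 0))‖ ≤
      (C * (M * T) + C * (M * T * Real.exp (M * T)) + |ε| * (C * Real.exp (M * T))) *
        ‖x 0 - y 0‖ := by
  have h0 : (0 : ℝ) ∈ Icc 0 T := ⟨le_rfl, ht.1.trans ht.2⟩
  have hdrift := hx.norm_sub_initial_le hv ht
  have hshift : y 0 + (x t - x 0) ∈ closedBall p ρ := by
    rw [mem_closedBall_iff_norm] at hy0 ⊢
    rw [add_sub_right_comm]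
    exact (norm_add_le_of_le hy0 hdrift).trans (by linarith)
  have hf_le : ‖f t (x t) - f t (y t) - (f t (x 0) - f t (y 0))‖ ≤
      C * (M * T) * ‖x 0 - y 0‖ + C * (M * T * Real.exp (M * T) * ‖x 0 - y 0‖) := by
    refine ((hf_incr t).norm_sub_sub_sub_le (hf.lipschitzOnWith t) (hx.mapsTo h0) (hy.mapsTo h0)
      (hx.mapsTo ht) (hy.mapsTo ht) hshift).trans ?_
    gcongr
    exact hx.norm_sub_initial_sub_le hy hv ht
  have hg_le : ‖ε • (g t (x t) - g t (y t))‖ ≤ |ε| * (C * (Real.exp (M * T) * ‖x 0 - y 0‖)) := by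
    rw [norm_smul, Real.norm_eq_abs]
    refine mul_le_mul_of_nonneg_left (((hg.lipschitzOnWith t).norm_sub_le (hx.mapsTo ht)
      (hy.mapsTo ht)).trans ?_) (abs_nonneg ε)
    gcongr
    exact hx.norm_sub_le hy hv ht
  calc ‖f t (x t) + ε • g t (x t) - (f t (y t) + ε • g t (y t)) - (f t (x 0) - f t (y 0))‖
      = ‖(f t (x t) - f t (y t) - (f t (x 0) - f t (y 0))) + ε • (g t (x t) - g t (y t))‖ := by
        rw [smul_sub]; congr 1; abel
    _ ≤ _ := norm_add_le_of_le hf_le hg_le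
    _ = _ := by ring

theorem norm_scaledDisplacement_sub_sub_le (hf : IsBoundedLipschitzOn f (closedBall p ρ) C)
    (hf_incr : ∀ t, LipschitzIncrementsOn C (f t) (closedBall p ρ))
    (hg : IsBoundedLipschitzOn g (closedBall p ρ) C)
    (hv : IsBoundedLipschitzOn v (closedBall p ρ) M) (hT : 0 < T) (hMT : M * T ≤ ρ - r)
    (hx : IsConfinedIntegralCurve x v (closedBall p ρ) T)
    (hy : IsConfinedIntegralCurve y v (closedBall p ρ) T) (hy0 : y 0 ∈ closedBall p r) :
    ‖scaledDisplacement T ε f g x - scaledDisplacement T ε f g y -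
        ((⨍ t in (0 : ℝ)..T, f t (x 0)) - ⨍ t in (0 : ℝ)..T, f t (y 0))‖ ≤
      (C * (M * T) + C * (M * T * Real.exp (M * T)) + |ε| * (C * Real.exp (M * T))) *
        ‖x 0 - y 0‖ := by
  have h0 : (0 : ℝ) ∈ Icc 0 T := ⟨le_rfl, hT.le⟩
  have hintx := intervalIntegrable_scaledDisplacement_integrand (ε := ε) hf hg hx hT.le
  have hinty := intervalIntegrable_scaledDisplacement_integrand (ε := ε) hf hg hy hT.le
  have hintx0 := hf.intervalIntegrable_const (hx.mapsTo h0) 0 T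
  have hinty0 := hf.intervalIntegrable_const (hy.mapsTo h0) 0 T
  rw [scaledDisplacement, scaledDisplacement, ← interval_average_sub hintx hinty,
    ← interval_average_sub hintx0 hinty0,
    ← interval_average_sub (hintx.sub hinty) (hintx0.sub hinty0)]
  refine norm_interval_average_le_of_norm_le_const hT.ne fun t ht => ?_
  rw [uIoc_of_le hT.le] at ht
  exact norm_scaledDisplacement_integrand_sub_sub_le hf hf_incr hg hv hMT hx hy hy0
    (Ioc_subset_Icc_self ht)

end ScaledDisplacement

section ApproximatesLinearOn

variable {E F : Type*} [NormedAddCommGroup E] [NormedSpace ℝ E] [NormedAddCommGroup F]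
  [NormedSpace ℝ F] {D h : E → F} {p : E} {c κ : ℝ≥0}

theorem approximatesLinearOn_of_lipschitzOnWith_sub {A : E →L[ℝ] F} {s : Set E}
    (hh : ApproximatesLinearOn h A s c) (hD : LipschitzOnWith κ (D - h) s) :
    ApproximatesLinearOn D A s (c + κ) := by
  rw [ApproximatesLinearOn.approximatesLinearOn_iff_lipschitzOnWith] at hh ⊢
  have hsplit : D - A = (h - A) + (D - h) := by abel
  rw [hsplit]
  exact hh.add hD

theorem exists_eq_zero_of_approximatesLinearOn [CompleteSpace E] {A : E ≃L[ℝ] F} {r : ℝ}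
    (hD : ApproximatesLinearOn D (A : E →L[ℝ] F) (closedBall p r) c)
    (hc : ‖(A.symm : F →L[ℝ] E)‖ * c ≤ 1 / 2) (hr : 2 * ‖(A.symm : F →L[ℝ] E)‖ * ‖D p‖ ≤ r) :
    ∃ a ∈ closedBall p (2 * ‖(A.symm : F →L[ℝ] E)‖ * ‖D p‖), D a = 0 := by
  rcases A.subsingleton_or_nnnorm_symm_pos with _ | hpos
  · have : Subsingleton F := A.symm.injective.subsingleton
    exact ⟨p, mem_closedBall_self (by positivity), Subsingleton.elim _ _⟩
  · refine hD.surjOn_closedBall_of_nonlinearRightInverse A.toNonlinearRightInverse (by positivity)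
      (closedBall_subset_closedBall hr) ?_
    have hpos' : 0 < ‖(A.symm : F →L[ℝ] E)‖ := hpos
    change 0 ∈ closedBall (D p)
      ((‖(A.symm : F →L[ℝ] E)‖⁻¹ - c) * (2 * ‖(A.symm : F →L[ℝ] E)‖ * ‖D p‖))
    rw [mem_closedBall, dist_zero_left]
    calc ‖D p‖ ≤ 2 * (1 - ‖(A.symm : F →L[ℝ] E)‖ * c) * ‖D p‖ :=
          le_mul_of_one_le_left (norm_nonneg _) (by linarith)
      _ = _ := by field_simp

end ApproximatesLinearOn

section Averaging

variable {E : Type*} [NormedAddCommGroup E] [NormedSpace ℝ E] {f : ℝ → E → E} {p : E} {ρ T : ℝ}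
  {C : ℝ≥0}

theorem exists_pos_approximatesLinearOn_average (hf : IsBoundedLipschitzOn f (closedBall p ρ) C)
    (hf_incr : ∀ t, LipschitzIncrementsOn C (f t) (closedBall p ρ)) (hρ : 0 < ρ) (hT : 0 < T)
    {A : E →L[ℝ] E} (hA : HasFDerivAt (fun a => ⨍ t in (0 : ℝ)..T, f t a) A p) {c : ℝ≥0}
    (hc : 0 < c) :
    ∃ r, 0 < r ∧ r < ρ ∧ ApproximatesLinearOn (fun a => ⨍ t in (0 : ℝ)..T, f t a)
      A (closedBall p r) c := by
  have hincr : LipschitzIncrementsOn C (fun a => ⨍ t in (0 : ℝ)..T, f t a) (closedBall p ρ) :=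
    .interval_average hT.ne hf_incr fun a ha => hf.intervalIntegrable_const ha 0 T
  have hstrict := hincr.hasStrictFDerivAt (closedBall_mem_nhds p hρ) hA
  obtain ⟨s, hs, hsc⟩ := hstrict.approximates_deriv_on_nhds (Or.inr hc)
  obtain ⟨r, hr, hrs⟩ := nhds_basis_closedBall.mem_iff.1 hs
  refine ⟨min r (ρ / 2), by positivity, (min_le_right _ _).trans_lt (half_lt_self hρ), ?_⟩
  exact hsc.mono_set ((closedBall_subset_closedBall (min_le_left _ _)).trans hrs)

variable [CompleteSpace E] {A : E ≃L[ℝ] E}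

theorem exists_closed_integralCurve {g : ℝ → E → E} {r ε : ℝ} {M c κ : ℝ≥0}
    (hf : IsBoundedLipschitzOn f (closedBall p ρ) C)
    (hf_incr : ∀ t, LipschitzIncrementsOn C (f t) (closedBall p ρ))
    (hg : IsBoundedLipschitzOn g (closedBall p ρ) C)
    (hfg : IsBoundedLipschitzOn (ε • f + ε ^ 2 • g) (closedBall p ρ) M) (hT : 0 < T)
    (hr : 0 ≤ r) (hMT : M * T ≤ ρ - r) (hp : ⨍ t in (0 : ℝ)..T, f t p = 0)
    (hA : ApproximatesLinearOn (fun a => ⨍ t in (0 : ℝ)..T, f t a) (A : E →L[ℝ] E)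
      (closedBall p r) c)
    (hκ : C * (M * T) + C * (M * T * Real.exp (M * T)) + |ε| * (C * Real.exp (M * T)) ≤ κ)
    (hcκ : ‖(A.symm : E →L[ℝ] E)‖ * (c + κ) ≤ 1 / 2)
    (hδ : 2 * ‖(A.symm : E →L[ℝ] E)‖ * (C * (M * T) + |ε| * C) ≤ r) :
    ∃ x : ℝ → E, IsConfinedIntegralCurve x (ε • f + ε ^ 2 • g) (closedBall p ρ) T ∧ x T = x 0 ∧
      ‖x 0 - p‖ ≤ 2 * ‖(A.symm : E →L[ℝ] E)‖ * (C * (M * T) + |ε| * C) := by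
  choose! x hx hx0 using fun a (ha : a ∈ closedBall p r) =>
    IsConfinedIntegralCurve.exists_of_mem_closedBall hfg hT.le hMT ha
  have hp_mem : p ∈ closedBall p r := mem_closedBall_self hr
  have hlip : LipschitzOnWith κ
      ((fun a => scaledDisplacement T ε f g (x a)) - fun a => ⨍ t in (0 : ℝ)..T, f t a)
      (closedBall p r) := LipschitzOnWith.of_dist_le_mul fun a ha b hb => by
    have hle := norm_scaledDisplacement_sub_sub_le hf hf_incr hg hfg hT hMT (hx a ha) (hx b hb)
      ((hx0 b hb).symm ▸ hb) (ε := ε)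
    rw [hx0 a ha, hx0 b hb, sub_sub_sub_comm] at hle
    rw [dist_eq_norm, dist_eq_norm]
    exact hle.trans (by gcongr)
  have hDp : ‖scaledDisplacement T ε f g (x p)‖ ≤ C * (M * T) + |ε| * C := by
    simpa only [hx0 p hp_mem, hp, sub_zero] using
      norm_scaledDisplacement_sub_average_le (ε := ε) hf hg hfg (hx p hp_mem) hT
  have hDp' := mul_le_mul_of_nonneg_left hDp
    (by positivity : 0 ≤ 2 * ‖(A.symm : E →L[ℝ] E)‖)
  obtain ⟨a, ha, hDa⟩ := exists_eq_zero_of_approximatesLinearOn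
    (approximatesLinearOn_of_lipschitzOnWith_sub hA hlip) hcκ (hDp'.trans hδ)
  have ha' : ‖a - p‖ ≤ 2 * ‖(A.symm : E →L[ℝ] E)‖ * (C * (M * T) + |ε| * C) :=
    (mem_closedBall_iff_norm.1 ha).trans hDp'
  have ha_mem : a ∈ closedBall p r := mem_closedBall_iff_norm.2 (ha'.trans hδ)
  refine ⟨x a, hx a ha_mem, ?_, by rwa [hx0 a ha_mem]⟩
  rw [← sub_eq_zero, sub_eq_smul_scaledDisplacement hT (hx a ha_mem) hfg, hDa, smul_zero]

theorem exists_eventually_closed_integralCurve {g : ℝ → ℝ → E → E}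
    (hf : IsBoundedLipschitzOn f (closedBall p ρ) C)
    (hf_incr : ∀ t, LipschitzIncrementsOn C (f t) (closedBall p ρ))
    (hg : ∀ᶠ ε in 𝓝[>] 0, IsBoundedLipschitzOn (g ε) (closedBall p ρ) C)
    (hρ : 0 < ρ) (hT : 0 < T) (hp : ⨍ t in (0 : ℝ)..T, f t p = 0)
    (hA : HasFDerivAt (fun a => ⨍ t in (0 : ℝ)..T, f t a) (A : E →L[ℝ] E) p) :
    ∃ δ : ℝ → ℝ, Tendsto δ (𝓝[>] 0) (𝓝 0) ∧ ∀ᶠ ε in 𝓝[>] 0, ∃ x : ℝ → E,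
      IsConfinedIntegralCurve x (ε • f + ε ^ 2 • g ε) (closedBall p ρ) T ∧ x T = x 0 ∧
        ‖x 0 - p‖ ≤ δ ε := by
  obtain ⟨c, hc, hAc⟩ : ∃ c : ℝ≥0, 0 < c ∧ ‖(A.symm : E →L[ℝ] E)‖ * (c + c) ≤ 1 / 2 := by
    refine ⟨(4 * (‖(A.symm : E →L[ℝ] E)‖₊ + 1))⁻¹, by positivity, ?_⟩
    push_cast
    field_simp
    linarith
  obtain ⟨r, hr, hrρ, happrox⟩ := exists_pos_approximatesLinearOn_average hf hf_incr hρ hT hA hc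
  let M : ℝ → ℝ≥0 := fun ε => ‖ε‖₊ * C + ‖ε ^ 2‖₊ * C
  let κ : ℝ → ℝ := fun ε =>
    C * (M ε * T) + C * (M ε * T * Real.exp (M ε * T)) + |ε| * (C * Real.exp (M ε * T))
  let δ : ℝ → ℝ := fun ε => 2 * ‖(A.symm : E →L[ℝ] E)‖ * (C * (M ε * T) + |ε| * C)
  have hM : Continuous M := by fun_prop
  have tendsto_zero : ∀ h : ℝ → ℝ, Continuous h → h 0 = 0 → Tendsto h (𝓝[>] 0) (𝓝 0) :=
    fun h hcont h0 => (hcont.tendsto' 0 0 h0).mono_left nhdsWithin_le_nhds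
  have hMT : Tendsto (fun ε => M ε * T) (𝓝[>] 0) (𝓝 0) :=
    tendsto_zero _ (by fun_prop) (by simp [M])
  have hκ : Tendsto κ (𝓝[>] 0) (𝓝 0) := tendsto_zero κ (by fun_prop) (by simp [κ, M])
  have hδ : Tendsto δ (𝓝[>] 0) (𝓝 0) := tendsto_zero δ (by fun_prop) (by simp [δ, M])
  refine ⟨δ, hδ, ?_⟩
  filter_upwards [hg, hMT.eventually_le_const (sub_pos.2 hrρ),
    hκ.eventually_le_const (NNReal.coe_pos.2 hc), hδ.eventually_le_const hr] with ε hgε hMε hκε hδε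
  exact exists_closed_integralCurve hf hf_incr hgε ((hf.const_smul ε).add (hgε.const_smul (ε ^ 2)))
    hT hr.le hMε hp happrox hκε hAc hδε

theorem exists_eventually_periodic_isIntegralCurve {g : ℝ → ℝ → E → E}
    (hf : IsBoundedLipschitzOn f (closedBall p ρ) C)
    (hf_incr : ∀ t, LipschitzIncrementsOn C (f t) (closedBall p ρ))
    (hg : ∀ᶠ ε in 𝓝[>] 0, IsBoundedLipschitzOn (g ε) (closedBall p ρ) C)
    (hf_per : Function.Periodic f T) (hg_per : ∀ ε, Function.Periodic (g ε) T)
    (hρ : 0 < ρ) (hT : 0 < T) (hp : ⨍ t in (0 : ℝ)..T, f t p = 0)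
    (hA : HasFDerivAt (fun a => ⨍ t in (0 : ℝ)..T, f t a) (A : E →L[ℝ] E) p) :
    ∃ φ : ℝ → ℝ → E,
      (∀ᶠ ε in 𝓝[>] 0, (∀ t, φ ε t ∈ closedBall p ρ) ∧
        IsIntegralCurve (φ ε) (ε • f + ε ^ 2 • g ε) ∧ Function.Periodic (φ ε) T) ∧
      Tendsto (fun ε => φ ε 0) (𝓝[>] 0) (𝓝 p) := by
  obtain ⟨δ, hδ, hclosed⟩ := exists_eventually_closed_integralCurve hf hf_incr hg hρ hT hp hA
  obtain ⟨x, hx⟩ := hclosed.choice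
  refine ⟨fun ε => periodicExtension hT (x ε), ?_, ?_⟩
  · filter_upwards [hx] with ε ⟨hxε, hend, _⟩
    have hper : Function.Periodic (ε • f + ε ^ 2 • g ε) T :=
      (hf_per.smul ε).add ((hg_per ε).smul (ε ^ 2))
    exact ⟨periodicExtension_mem hT hxε.mapsTo, isIntegralCurve_periodicExtension hT hper
      hxε.isIntegralCurveOn hend, periodic_periodicExtension hT (x ε)⟩
  · simp only [periodicExtension_zero]
    rw [tendsto_iff_norm_sub_tendsto_zero]
    exact squeeze_zero' (.of_forall fun _ => norm_nonneg _) (hx.mono fun _ h => h.2.2) hδ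

theorem first_order_averaging_general (Ω : Set E) (hΩ : IsOpen Ω) (T ε₀ : ℝ) (hT : 0 < T)
    (hε₀ : 0 < ε₀) (f : ℝ → E → E) (g : ℝ → E → ℝ → E)
    (hfper : ∀ t x, f (t + T) x = f t x) (hgper : ∀ t x ε, g (t + T) x ε = g t x ε)
    (hf1 : ∀ t, DifferentiableOn ℝ (f t) Ω) (hf2 : ∀ t, DifferentiableOn ℝ (fderiv ℝ (f t)) Ω)
    (hg1 : ∀ t, ∀ ε ∈ Ioc (0 : ℝ) ε₀, DifferentiableOn ℝ (fun x => g t x ε) Ω)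
    (hfc : ContinuousOn (fun q : ℝ × E => f q.1 q.2) (univ ×ˢ Ω))
    (hgc : ∀ ε ∈ Ioc (0 : ℝ) ε₀, ContinuousOn (fun q : ℝ × E => g q.1 q.2 ε) (univ ×ˢ Ω))
    (hbound : ∃ C : ℝ, ∀ t : ℝ, ∀ x ∈ Ω, ∀ ε ∈ Ioc (0 : ℝ) ε₀,
      ‖f t x‖ ≤ C ∧ ‖fderiv ℝ (f t) x‖ ≤ C ∧ ‖fderiv ℝ (fderiv ℝ (f t)) x‖ ≤ C ∧
        ‖g t x ε‖ ≤ C ∧ ‖fderiv ℝ (fun y => g t y ε) x‖ ≤ C)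
    (f0 : E → E) (hf0 : ∀ y, f0 y = (1 / T) • ∫ t in (0 : ℝ)..T, f t y)
    (p : E) (hp : p ∈ Ω) (hp0 : f0 p = 0) (A : E ≃L[ℝ] E) (hA : HasFDerivAt f0 (A : E →L[ℝ] E) p) :
    ∃ ε₁ : ℝ, 0 < ε₁ ∧ ε₁ ≤ ε₀ ∧ ∃ φ : ℝ → ℝ → E,
      (∀ ε : ℝ, 0 < ε → ε < ε₁ →
        (∀ t, φ ε t ∈ Ω) ∧
        (∀ t, HasDerivAt (φ ε) (ε • f t (φ ε t) + ε ^ 2 • g t (φ ε t) ε) t) ∧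
        (∀ t, φ ε (t + T) = φ ε t)) ∧
      Tendsto (fun ε => φ ε 0) (𝓝[>] 0) (𝓝 p) := by
  obtain ⟨ρ, hρ, hρΩ⟩ := nhds_basis_closedBall.mem_iff.1 (hΩ.mem_nhds hp)
  obtain ⟨C, hC⟩ := hbound
  replace hC := fun t x (hx : x ∈ closedBall p ρ) ε hε => hC t x (hρΩ hx) ε hε
  have hε₀_mem : ε₀ ∈ Ioc 0 ε₀ := ⟨hε₀, le_rfl⟩
  have hle : C ≤ C.toNNReal := C.le_coe_toNNReal
  have hconvex := convex_closedBall p ρ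
  have hnhds : ∀ x ∈ closedBall p ρ, Ω ∈ 𝓝 x := fun x hx => hΩ.mem_nhds (hρΩ hx)
  have hf_diff := fun t x hx => (hf1 t).differentiableAt (hnhds x hx)
  have hf : IsBoundedLipschitzOn f (closedBall p ρ) C.toNNReal :=
    .of_norm_fderiv_le hconvex (hfc.mono (prod_mono_right hρΩ))
      (fun t x hx => (hC t x hx ε₀ hε₀_mem).1.trans hle) hf_diff
      (fun t x hx => (hC t x hx ε₀ hε₀_mem).2.1.trans hle)
  have hf_incr : ∀ t, LipschitzIncrementsOn C.toNNReal (f t) (closedBall p ρ) := fun t =>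
    .of_norm_fderiv_fderiv_le hconvex (hf_diff t)
      (fun x hx => (hf2 t).differentiableAt (hnhds x hx))
      (fun x hx => (hC t x hx ε₀ hε₀_mem).2.2.1.trans hle)
  have hg : ∀ ε ∈ Ioc 0 ε₀, IsBoundedLipschitzOn (fun t x => g t x ε) (closedBall p ρ)
      C.toNNReal := fun ε hε =>
    .of_norm_fderiv_le hconvex ((hgc ε hε).mono (prod_mono_right hρΩ))
      (fun t x hx => (hC t x hx ε hε).2.2.2.1.trans hle)
      (fun t x hx => (hg1 t ε hε).differentiableAt (hnhds x hx))
      (fun t x hx => (hC t x hx ε hε).2.2.2.2.trans hle)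
  have hf0_eq : f0 = fun y => ⨍ t in (0 : ℝ)..T, f t y := funext fun y => by
    rw [hf0, interval_average_eq, sub_zero, one_div]
  subst hf0_eq
  obtain ⟨φ, hφ, hlim⟩ := exists_eventually_periodic_isIntegralCurve hf hf_incr
    (eventually_of_mem (Ioc_mem_nhdsGT hε₀) hg) (fun t => funext (hfper t))
    (fun ε t => funext (hgper t · ε)) hρ hT hp0 hA
  obtain ⟨ε₁, ⟨hε₁, hε₁₀⟩, hsub⟩ := (mem_nhdsGT_iff_exists_mem_Ioc_Ioo_subset hε₀).1 hφ
  refine ⟨ε₁, hε₁, hε₁₀, φ, fun ε hε hεε₁ => ?_, hlim⟩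
  obtain ⟨hmem, hsol, hper⟩ := hsub ⟨hε, hεε₁⟩
  exact ⟨fun t => hρΩ (hmem t), hsol, hper⟩

end Averaging

-- Where `h` is not differentiable, `fderiv ℝ h x = 0` has nonzero determinant only
-- in dimension `0`.
theorem exists_equiv_hasFDerivAt_of_det_ne_zero {E : Type*} [NormedAddCommGroup E]
    [NormedSpace ℝ E] [FiniteDimensional ℝ E] {h : E → E} {x : E}
    (hdet : (fderiv ℝ h x).det ≠ 0) : ∃ A : E ≃L[ℝ] E, HasFDerivAt h (A : E →L[ℝ] E) x := by
  refine ⟨(fderiv ℝ h x).toContinuousLinearEquivOfDetNeZero hdet, ?_⟩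
  rcases subsingleton_or_nontrivial E with _ | _
  · exact (hasFDerivAt_of_subsingleton h x).congr_fderiv (Subsingleton.elim _ _)
  · by_cases hh : DifferentiableAt ℝ h x
    · simpa using hh.hasFDerivAt
    · exact absurd (by simp [fderiv_zero_of_not_differentiableAt hh, ContinuousLinearMap.det]) hdet

/-- **First-order averaging theorem.** Let `Ω ⊆ ℝⁿ` be open, `T > 0`, `ε₀ > 0`, and let
`f(t,x)` and `g(t,x,ε)` be `T`-periodic in `t`, with `f` twice continuously
differentiable in `x`, `g` continuously differentiable in `x`, all of
`f, ∂f/∂x, ∂²f/∂x², g, ∂g/∂x` continuous and bounded by a constant uniformly in `ε`.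
If `p ∈ Ω` is a zero of the averaged function `f⁰(y) = (1/T)∫₀ᵀ f(t,y) dt` at which the
Jacobian `∂f⁰/∂y` has nonzero determinant, then there is `ε₁ ∈ (0, ε₀]` such that for
every `ε ∈ (0, ε₁)` the equation `ẋ = εf(t,x) + ε²g(t,x,ε)` has a `T`-periodic solution
`φ(·,ε)` in `Ω`, with `φ(0,ε) → p` as `ε → 0`. -/
theorem first_order_averaging {n : ℕ} (Ω : Set (Fin n → ℝ)) (hΩ : IsOpen Ω)
    (T ε₀ : ℝ) (hT : 0 < T) (hε₀ : 0 < ε₀)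
    (f : ℝ → (Fin n → ℝ) → Fin n → ℝ)
    (g : ℝ → (Fin n → ℝ) → ℝ → Fin n → ℝ)
    (hfper : ∀ t x, f (t + T) x = f t x)
    (hgper : ∀ t x ε, g (t + T) x ε = g t x ε)
    (hf2 : ∀ t, ContDiffOn ℝ 2 (f t) Ω)
    (hg1 : ∀ t, ∀ ε ∈ Set.Ioc (0 : ℝ) ε₀, ContDiffOn ℝ 1 (fun x => g t x ε) Ω)
    (hfc : ContinuousOn (fun q : ℝ × (Fin n → ℝ) => f q.1 q.2) (Set.univ ×ˢ Ω))
    (hgc : ∀ ε ∈ Set.Ioc (0 : ℝ) ε₀,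
      ContinuousOn (fun q : ℝ × (Fin n → ℝ) => g q.1 q.2 ε) (Set.univ ×ˢ Ω))
    (hbound : ∃ C : ℝ, ∀ t : ℝ, ∀ x ∈ Ω, ∀ ε ∈ Set.Ioc (0 : ℝ) ε₀,
      ‖f t x‖ ≤ C ∧ ‖fderiv ℝ (f t) x‖ ≤ C ∧ ‖fderiv ℝ (fderiv ℝ (f t)) x‖ ≤ C ∧
        ‖g t x ε‖ ≤ C ∧ ‖fderiv ℝ (fun y => g t y ε) x‖ ≤ C)
    (f0 : (Fin n → ℝ) → Fin n → ℝ)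
    (hf0 : ∀ y, f0 y = (1 / T) • ∫ t in (0 : ℝ)..T, f t y)
    (p : Fin n → ℝ) (hp : p ∈ Ω) (hp0 : f0 p = 0)
    (hdet : (fderiv ℝ f0 p).det ≠ 0) :
    ∃ ε₁ : ℝ, 0 < ε₁ ∧ ε₁ ≤ ε₀ ∧ ∃ φ : ℝ → ℝ → Fin n → ℝ,
      (∀ ε : ℝ, 0 < ε → ε < ε₁ →
        (∀ t, φ ε t ∈ Ω) ∧
        (∀ t, HasDerivAt (φ ε) (ε • f t (φ ε t) + ε ^ 2 • g t (φ ε t) ε) t) ∧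
        (∀ t, φ ε (t + T) = φ ε t)) ∧
      Filter.Tendsto (fun ε => φ ε 0) (nhdsWithin 0 (Set.Ioi 0)) (nhds p) := by
  obtain ⟨A, hA⟩ := exists_equiv_hasFDerivAt_of_det_ne_zero hdet
  exact first_order_averaging_general Ω hΩ T ε₀ hT hε₀ f g hfper hgper
    (fun t => (hf2 t).differentiableOn two_ne_zero)
    (fun t => ((hf2 t).fderiv_of_isOpen hΩ one_add_one_eq_two.le).differentiableOn one_ne_zero)
    (fun t ε hε => (hg1 t ε hε).differentiableOn one_ne_zero) hfc hgc hbound f0 hf0 p hp hp0 A hA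
end

section
/- (Second-order averaging.) Let Ω ⊆ ℝⁿ be open, T > 0, ε₀ > 0, and let f, g : ℝ × Ω → ℝⁿ and R : ℝ × Ω × (0, ε₀] → ℝⁿ be T-periodic in the first variable, with ∂f/∂x Lipschitz in x, g and R Lipschitz in x, all continuous, and |R| bounded uniformly. Define f⁰(y) = (1/T)·∫₀ᵀ f(t,y) dt, y¹(t,x) = ∫₀ᵗ f(s,x) ds, f¹(t,x) = (∂f/∂x)(t,x)·y¹(t,x), and let f¹⁰ and g⁰ be the averages over [0,T] of f¹ and g respectively. Suppose f⁰ ≡ 0 on Ω and p ∈ Ω satisfies f¹⁰(p) + g⁰(p) = 0 and det( ∂(f¹⁰ + g⁰)/∂y (p) ) ≠ 0. Then there exists ε₁ ∈ (0, ε₀] such that for every ε ∈ (0, ε₁) the differential equation ẋ = ε·f(t,x) + ε²·g(t,x) + ε³·R(t,x,ε) has a T-periodic solution φ(·, ε), and φ(0, ε) → p as ε → 0. -/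
/-!
The time-`T` map of the equation moves an initial point `z` by `ε² T F(z) + O(ε³)`, uniformly in
`z` near `p`, where `F = f¹⁰ + g⁰`: the term of order `ε` is `ε ∫₀ᵀ f(t, z) dt`, which vanishes,
and the one of order `ε²` is found by inserting `z + ε y¹(t, z)` into the equation. Periodic
solutions correspond to zeros of the displacement divided by `ε² T`. This map is `C⁰`-close, but
not known to be `C¹`-close, to `F`, so the nondegenerate zero `p` of `F` is continued by
Brouwer's theorem instead of the implicit function theorem, on a ball of radius `O(ε)` around `p`;
this also gives the limit of `φ(0, ε)`. In the sup norm of `ℝⁿ` these balls are cubes.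

Brouwer's theorem reduces to the absence of Lipschitz retractions `x ↦ x + U(x)` of a cube onto its
boundary. For such a retraction `∫ det (1 + t U')` is a polynomial in `t`; for small `t` the map
`x ↦ x + t U(x)` is a bijection of the cube and the integral is its volume, whereas the integrand
vanishes almost everywhere at `t = 1`.
-/

section

open MeasureTheory Module Set Metric Filter Topology
open scoped NNReal

namespace SecondOrderAveraging

/-! ### The Jacobian integral of a Lipschitz perturbation of the identity -/

section Determinant

theorem exists_polynomial_eval_eq_det_one_add_smul {K V : Type*} [Field K] [AddCommGroup V]
    [Module K V] [FiniteDimensional K V] (φ : V →ₗ[K] V) :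
    ∃ P : Polynomial K, P.natDegree ≤ finrank K V ∧
      ∀ t, P.eval t = LinearMap.det (1 + t • φ) := by
  classical
  set b := finBasis K V
  set A := LinearMap.toMatrix b b φ
  refine ⟨((Polynomial.X : Polynomial K) • A.map Polynomial.C +
    (1 : Matrix _ _ K).map Polynomial.C).det, ?_, fun t => ?_⟩
  · simpa using Polynomial.natDegree_det_X_add_C_le A 1
  · rw [← LinearMap.det_toMatrix b, map_add, map_smul, LinearMap.toMatrix_one,
      ← Polynomial.coe_evalRingHom, RingHom.map_det]
    congr 1
    ext i j
    simp [A, Matrix.one_apply, apply_ite, add_comm, mul_comm t]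

theorem det_one_add_eq_sum_lagrange {K V ι : Type*} [Field K] [AddCommGroup V] [Module K V]
    [FiniteDimensional K V] [DecidableEq ι] (φ : V →ₗ[K] V) {s : Finset ι} {v : ι → K}
    (hv : InjOn v s) (hs : finrank K V < s.card) :
    LinearMap.det (1 + φ) =
      ∑ k ∈ s, (Lagrange.basis s v k).eval 1 * LinearMap.det (1 + v k • φ) := by
  obtain ⟨P, hdeg, hP⟩ := exists_polynomial_eval_eq_det_one_add_smul φ
  have hdeg' : P.degree < s.card :=
    Polynomial.degree_le_natDegree.trans_lt (by exact_mod_cast hdeg.trans_lt hs)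
  calc LinearMap.det (1 + φ) = P.eval 1 := by rw [hP, one_smul]
    _ = (Lagrange.interpolate s v fun k => P.eval (v k)).eval 1 := by
      rw [← Lagrange.eq_interpolate hv hdeg']
    _ = ∑ k ∈ s, (Lagrange.basis s v k).eval 1 * LinearMap.det (1 + v k • φ) := by
      simp only [Lagrange.interpolate_apply, Polynomial.eval_finsetSum, Polynomial.eval_mul,
        Polynomial.eval_C, hP, mul_comm]

end Determinant

section Jacobian

variable {E : Type*} [NormedAddCommGroup E]

theorem bijective_add_of_lipschitzWith [CompleteSpace E] {U : E → E} {c : ℝ≥0}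
    (hU : LipschitzWith c U) (hc : c < 1) : Function.Bijective fun x => x + U x := by
  refine ⟨((AntilipschitzWith.id (α := E)).add_lipschitzWith hU (by simpa using hc)).injective,
    fun y => ?_⟩
  have hcontract : ContractingWith c fun x => y - U x :=
    ⟨hc, by simpa using (LipschitzWith.const y).sub hU⟩
  have hfix : y - U _ = _ := hcontract.fixedPoint_isFixedPt
  exact ⟨hcontract.fixedPoint, by simp only; nth_rw 1 [← hfix]; abel⟩

theorem image_ball_add_eq_ball [CompleteSpace E] {U : E → E} {c : ℝ≥0} (hU : LipschitzWith c U)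
    (hc : c < 1) {r : ℝ} (hzero : ∀ x, r ≤ ‖x‖ → U x = 0) :
    (fun x => x + U x) '' ball 0 r = ball 0 r := by
  obtain ⟨hinj, hsurj⟩ := bijective_add_of_lipschitzWith hU hc
  have himage_compl : (fun x => x + U x) '' (ball 0 r)ᶜ = (ball 0 r)ᶜ := by
    refine (image_congr fun x hx => ?_).trans (image_id _)
    simp [hzero x (by simpa using hx)]
  rw [← compl_inj_iff, ← image_compl_eq ⟨hinj, hsurj⟩, himage_compl]

variable [NormedSpace ℝ E] [FiniteDimensional ℝ E]

theorem det_one_add_pos_of_norm_lt_one {N : E →L[ℝ] E} (hN : ‖N‖ < 1) : 0 < (1 + N).det := by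
  have hne : ∀ s ∈ Icc (0 : ℝ) 1, (1 + s • N).det ≠ 0 := fun s hs => by
    have hnorm : ‖-(s • N)‖ < 1 := by
      rw [norm_neg, norm_smul, Real.norm_of_nonneg hs.1]
      exact (mul_le_of_le_one_left (norm_nonneg N) hs.2).trans_lt hN
    have hunit := isUnit_one_sub_of_norm_lt_one hnorm
    rw [sub_neg_eq_add] at hunit
    exact ((hunit.map ContinuousLinearMap.toLinearMapRingHom).map LinearMap.det).ne_zero
  have hcont : ContinuousOn (fun s : ℝ => (1 + s • N).det) (Icc 0 1) :=
    (ContinuousLinearMap.continuous_det.comp (by fun_prop)).continuousOn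
  by_contra! hle
  obtain ⟨s, hs, hdet⟩ := intermediate_value_Icc' zero_le_one hcont
    (show (0 : ℝ) ∈ Icc _ _ by simpa [ContinuousLinearMap.det] using hle)
  exact hne s hs hdet

theorem det_eq_zero_of_isLocalMax_norm {F : E → E} {F' : E →L[ℝ] E} {x : E}
    (hF : HasFDerivAt F F' x) (hmax : IsLocalMax (fun y => ‖F y‖) x) (hx : F x ≠ 0) :
    F'.det = 0 := by
  obtain ⟨ℓ, hℓ, hℓx⟩ := exists_dual_vector ℝ (F x) (norm_ne_zero_iff.2 hx)
  have hlocal : IsLocalMax (fun y => ℓ (F y)) x := by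
    filter_upwards [hmax] with y hy
    calc ℓ (F y) ≤ ‖ℓ‖ * ‖F y‖ := (le_abs_self _).trans (ℓ.le_opNorm _)
      _ ≤ ‖F x‖ := by rwa [hℓ, one_mul]
      _ = ℓ (F x) := hℓx.symm
  have hzero : ℓ.comp F' = 0 := hlocal.hasFDerivAt_eq_zero (ℓ.hasFDerivAt.comp x hF)
  by_contra hdet
  obtain ⟨w, hw⟩ := (F'.toContinuousLinearEquivOfDetNeZero hdet).surjective (F x)
  have : ℓ (F x) = 0 := by rw [← hw]; exact DFunLike.congr_fun hzero w
  exact hx (norm_eq_zero.1 (by simpa [hℓx] using this))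

variable [MeasurableSpace E] [BorelSpace E]

theorem measure_image_eq_zero_of_lipschitzWith (μ : Measure E) [μ.IsAddHaarMeasure] {F : E → E}
    {c : ℝ≥0} (hF : LipschitzWith c F) {s : Set E} (hs : μ s = 0) : μ (F '' s) = 0 := by
  have hH : (Measure.hausdorffMeasure (finrank ℝ E) : Measure E) s = 0 :=
    Measure.absolutelyContinuous_isAddHaarMeasure _ μ hs
  refine Measure.absolutelyContinuous_isAddHaarMeasure μ
    (Measure.hausdorffMeasure (finrank ℝ E)) (le_antisymm ?_ bot_le)
  simpa [hH] using hF.hausdorffMeasure_image_le (Nat.cast_nonneg (finrank ℝ E)) s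

variable {U : E → E} {c : ℝ≥0} {r : ℝ}

theorem integrableOn_det_one_add_smul_fderiv (μ : Measure E) (hU : LipschitzWith c U) (t : ℝ)
    {s : Set E} (hs : μ s ≠ ⊤) : IntegrableOn (fun x => (1 + t • fderiv ℝ U x).det) s μ := by
  have hcont : Continuous fun M : E →L[ℝ] E => (1 + t • M).det :=
    ContinuousLinearMap.continuous_det.comp (by fun_prop)
  obtain ⟨C, hC⟩ := (isCompact_closedBall (0 : E →L[ℝ] E) c).exists_bound_of_continuousOn
    hcont.continuousOn
  refine Measure.integrableOn_of_bounded (M := C) hs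
    (hcont.measurable.comp (measurable_fderiv ℝ U)).aestronglyMeasurable (.of_forall fun x => ?_)
  exact hC _ (by simpa using norm_fderiv_le_of_lipschitz ℝ hU)

variable (μ : Measure E) [μ.IsAddHaarMeasure]

theorem integral_ball_det_one_add_fderiv_of_lt_one (hU : LipschitzWith c U) (hc : c < 1)
    (hzero : ∀ x, r ≤ ‖x‖ → U x = 0) :
    ∫ x in ball 0 r, (1 + fderiv ℝ U x).det ∂μ = μ.real (ball 0 r) := by
  set D : Set E := {x | DifferentiableAt ℝ U x}
  have hdiff : ∀ᵐ x ∂μ, x ∈ D := hU.ae_differentiableAt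
  have hae : (ball 0 r ∩ D : Set E) =ᵐ[μ] ball 0 r := inter_ae_eq_left_of_ae_eq_univ
    (eventuallyEq_univ.2 hdiff)
  have hmeas : MeasurableSet (ball 0 r ∩ D) :=
    measurableSet_ball.inter (measurableSet_of_differentiableAt ℝ U)
  have hderiv : ∀ x ∈ ball 0 r ∩ D,
      HasFDerivWithinAt (fun x => x + U x) (1 + fderiv ℝ U x) (ball 0 r ∩ D) x := fun x hx =>
    ((hasFDerivAt_id x).add (DifferentiableAt.hasFDerivAt hx.2)).hasFDerivWithinAt
  have hpos : ∀ x, 0 < (1 + fderiv ℝ U x).det := fun x =>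
    det_one_add_pos_of_norm_lt_one ((norm_fderiv_le_of_lipschitz ℝ hU).trans_lt hc)
  have himage : ((fun x => x + U x) '' (ball 0 r ∩ D) : Set E) =ᵐ[μ] ball 0 r := by
    refine EventuallyEq.trans ?_ (image_ball_add_eq_ball hU hc hzero).eventuallyEq
    refine (image_mono inter_subset_left).eventuallyLE.antisymm ?_
    rw [ae_le_set, ← image_sdiff (bijective_add_of_lipschitzWith hU hc).injective,
      sdiff_self_inter]
    exact measure_image_eq_zero_of_lipschitzWith μ (LipschitzWith.id.add hU)
      (measure_mono_null (fun x hx => hx.2) hdiff)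
  calc ∫ x in ball 0 r, (1 + fderiv ℝ U x).det ∂μ
      = ∫ x in ball 0 r ∩ D, |(1 + fderiv ℝ U x).det| • (1 : ℝ) ∂μ := by
        rw [setIntegral_congr_set hae]
        simp only [smul_eq_mul, mul_one, abs_of_pos (hpos _)]
    _ = ∫ _ in (fun x => x + U x) '' (ball 0 r ∩ D), (1 : ℝ) ∂μ :=
        (integral_image_eq_integral_abs_det_fderiv_smul μ hmeas hderiv
          (bijective_add_of_lipschitzWith hU hc).injective.injOn fun _ => 1).symm
    _ = μ.real (ball 0 r) := by
        rw [setIntegral_congr_set himage, setIntegral_const, smul_eq_mul, mul_one]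

/- The integral of `det (1 + t • U')` is polynomial in `t` and constant for small `t`, hence
constant. -/
theorem integral_ball_det_one_add_fderiv (hU : LipschitzWith c U)
    (hzero : ∀ x, r ≤ ‖x‖ → U x = 0) :
    ∫ x in ball 0 r, (1 + fderiv ℝ U x).det ∂μ = μ.real (ball 0 r) := by
  have hsmall : {t : ℝ | ‖t‖₊ * c < 1} ∈ 𝓝 0 := by
    have hcont : Continuous fun t : ℝ => ‖t‖₊ * c := by fun_prop
    exact (isOpen_Iio.preimage hcont).mem_nhds (by simp)
  obtain ⟨s, hs, hcard⟩ :=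
    (infinite_of_mem_nhds 0 hsmall).exists_subset_card_eq (finrank ℝ E + 1)
  have hnode : ∀ t ∈ s,
      ∫ x in ball 0 r, (1 + t • fderiv ℝ U x).det ∂μ = μ.real (ball 0 r) := fun t ht => by
    have hlip : LipschitzWith (‖t‖₊ * c) (t • U) := (lipschitzWith_smul t).comp hU
    rw [← integral_ball_det_one_add_fderiv_of_lt_one μ hlip (hs ht)
      fun x hx => by simp [hzero x hx], fderiv_const_smul_field]
    rfl
  have hinterp : ∀ x, (1 + fderiv ℝ U x).det =
      ∑ t ∈ s, (Lagrange.basis s id t).eval 1 * (1 + t • fderiv ℝ U x).det := fun x =>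
    det_one_add_eq_sum_lagrange (fderiv ℝ U x : E →ₗ[ℝ] E) (injOn_id _) (by simp [hcard])
  have hs_nonempty : s.Nonempty := Finset.card_pos.1 (by simp [hcard])
  calc ∫ x in ball 0 r, (1 + fderiv ℝ U x).det ∂μ
      = ∑ t ∈ s, (Lagrange.basis s id t).eval 1 *
          ∫ x in ball 0 r, (1 + t • fderiv ℝ U x).det ∂μ := by
        simp only [hinterp]
        rw [integral_finsetSum _ fun t _ =>
          (integrableOn_det_one_add_smul_fderiv μ hU t measure_ball_lt_top.ne).const_mul _]
        simp only [integral_const_mul]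
    _ = (∑ t ∈ s, (Lagrange.basis s id t).eval 1) * μ.real (ball 0 r) := by
        rw [Finset.sum_mul]
        exact Finset.sum_congr rfl fun t ht => by rw [hnode t ht]
    _ = μ.real (ball 0 r) := by
        rw [← Polynomial.eval_finsetSum, Lagrange.sum_basis (injOn_id _) hs_nonempty,
          Polynomial.eval_one, one_mul]

end Jacobian

/-! ### Brouwer's fixed point theorem for cubes -/

section Brouwer

variable {ι : Type*} [Fintype ι]

/-- The coordinatewise projection of `ι → ℝ` onto the cube `closedBall 0 r`. Unlike the radial
projection, it is `1`-Lipschitz for the sup norm. -/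
def clamp (r : ℝ) (x : ι → ℝ) : ι → ℝ :=
  fun i => max (-r) (min r (x i))

theorem lipschitzWith_clamp (r : ℝ) : LipschitzWith 1 (clamp r : (ι → ℝ) → ι → ℝ) :=
  LipschitzWith.of_dist_le_mul fun x y => by
    rw [NNReal.coe_one, one_mul]
    exact (dist_pi_le_iff dist_nonneg).2 fun i =>
      calc dist (max (-r) (min r (x i))) (max (-r) (min r (y i)))
          ≤ dist (min r (x i)) (min r (y i)) := by
            simpa only [Real.dist_eq, max_comm (-r)] using abs_max_sub_max_le_abs _ _ _
        _ ≤ dist (x i) (y i) := by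
            simpa only [Real.dist_eq, min_comm r] using abs_inf_sub_inf_le_abs _ _ _
        _ ≤ dist x y := dist_le_pi_dist x y i

theorem norm_clamp_le {r : ℝ} (hr : 0 ≤ r) (x : ι → ℝ) : ‖clamp r x‖ ≤ r :=
  (pi_norm_le_iff_of_nonneg hr).2 fun i =>
    abs_le.2 ⟨le_max_left _ _, max_le (by linarith) (min_le_left _ _)⟩

theorem clamp_of_norm_le {r : ℝ} {x : ι → ℝ} (hx : ‖x‖ ≤ r) : clamp r x = x := by
  funext i
  obtain ⟨hlower, hupper⟩ := abs_le.1 ((norm_le_pi_norm x i).trans hx)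
  rw [clamp, min_eq_right hupper, max_eq_right hlower]

theorem norm_clamp_of_le_norm {r : ℝ} (hr : 0 < r) {x : ι → ℝ} (hx : r ≤ ‖x‖) :
    ‖clamp r x‖ = r := by
  obtain ⟨i, hi⟩ : ∃ i, r ≤ |x i| := by
    by_contra! h
    exact hx.not_gt ((pi_norm_lt_iff hr).2 h)
  refine (norm_clamp_le hr.le x).antisymm (le_trans ?_ (norm_le_pi_norm (clamp r x) i))
  rcases le_abs.1 hi with h | h
  · exact le_abs.2 (.inl (le_max_of_le_right (le_min le_rfl h)))
  · exact le_abs.2 (.inr (le_neg.2 (max_le le_rfl (min_le_of_right_le (le_neg.2 h)))))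

theorem locallyLipschitz_smul {α E : Type*} [PseudoEMetricSpace α] [NormedAddCommGroup E]
    [NormedSpace ℝ E] {a : α → ℝ} {b : α → E} (ha : LocallyLipschitz a)
    (hb : LocallyLipschitz b) : LocallyLipschitz fun x => a x • b x := by
  have hsmul : LocallyLipschitz fun q : ℝ × E => q.1 • q.2 :=
    ContDiff.locallyLipschitz (𝕂 := ℝ) (contDiff_fst.smul contDiff_snd)
  exact hsmul.comp (ha.prodMk hb)

/- The Jacobian determinant of a retraction would vanish almost everywhere, yet integrate to the
volume of the cube. -/
theorem not_mapsTo_sphere_of_lipschitzOnWith {G : (ι → ℝ) → ι → ℝ} {c : ℝ≥0} {r : ℝ} (hr : 0 < r)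
    (hG : LipschitzOnWith c G (closedBall 0 r)) (hid : ∀ x ∈ sphere 0 r, G x = x) :
    ¬ MapsTo G (closedBall 0 r) (sphere 0 r) := by
  intro hmaps
  set U : (ι → ℝ) → ι → ℝ := fun x => G (clamp r x) - clamp r x
  have hU : LipschitzWith (c * 1 + 1) U := by
    refine LipschitzWith.sub (lipschitzOnWith_univ.1 ?_) (lipschitzWith_clamp r)
    exact hG.comp (lipschitzWith_clamp r).lipschitzOnWith fun x _ =>
      mem_closedBall_zero_iff.2 (norm_clamp_le hr.le x)
  have hzero : ∀ x, r ≤ ‖x‖ → U x = 0 := fun x hx =>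
    sub_eq_zero.2 (hid _ (mem_sphere_zero_iff_norm.2 (norm_clamp_of_le_norm hr hx)))
  have hnorm : ∀ x ∈ ball 0 r, ‖x + U x‖ = r := fun x hx => by
    have hx' : ‖x‖ ≤ r := (mem_ball_zero_iff.1 hx).le
    simpa [U, clamp_of_norm_le hx'] using hmaps (mem_closedBall_zero_iff.2 hx')
  have hdet : ∀ x ∈ ball 0 r, DifferentiableAt ℝ U x → (1 + fderiv ℝ U x).det = 0 :=
    fun x hx hdiff => by
      refine det_eq_zero_of_isLocalMax_norm ((hasFDerivAt_id x).add hdiff.hasFDerivAt) ?_ ?_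
      · filter_upwards [isOpen_ball.mem_nhds hx] with y hy
        exact ((hnorm y hy).trans (hnorm x hx).symm).le
      · exact norm_pos_iff.1 (hr.trans_eq (hnorm x hx).symm)
  have hintegral : ∫ x in ball 0 r, (1 + fderiv ℝ U x).det = 0 := by
    refine setIntegral_eq_zero_of_ae_eq_zero ?_
    filter_upwards [hU.ae_differentiableAt] with x hdiff hx using hdet x hx hdiff
  have hvolume : 0 < volume.real (ball (0 : ι → ℝ) r) :=
    ENNReal.toReal_pos (measure_ball_pos volume 0 hr).ne' measure_ball_lt_top.ne
  exact hvolume.ne' ((integral_ball_det_one_add_fderiv volume hU hzero).symm.trans hintegral)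

theorem exists_norm_eq_and_norm_sub_eq {E : Type*} [NormedAddCommGroup E] [NormedSpace ℝ E]
    [Nontrivial E] {r : ℝ} {x : E} (hx : ‖x‖ ≤ r) : ∃ y : E, ‖y‖ = r ∧ ‖y - x‖ = r - ‖x‖ := by
  rcases eq_or_ne x 0 with rfl | hx0
  · obtain ⟨y, hy⟩ := exists_norm_eq E ((norm_nonneg _).trans hx)
    exact ⟨y, hy, by simp [hy]⟩
  · have hpos : 0 < ‖x‖ := norm_pos_iff.2 hx0
    refine ⟨(r / ‖x‖) • x, ?_, ?_⟩
    · rw [norm_smul, Real.norm_of_nonneg (div_nonneg (hpos.le.trans hx) hpos.le),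
        div_mul_cancel₀ _ hpos.ne']
    · have hfactor : 0 ≤ r / ‖x‖ - 1 := sub_nonneg.2 ((one_le_div₀ hpos).2 hx)
      calc ‖(r / ‖x‖) • x - x‖ = ‖(r / ‖x‖ - 1) • x‖ := by rw [sub_smul, one_smul]
        _ = r - ‖x‖ := by
          rw [norm_smul, Real.norm_of_nonneg hfactor, sub_mul, one_mul,
            div_mul_cancel₀ _ hpos.ne']

theorem le_norm_stretch_smul {E : Type*} [NormedAddCommGroup E] [NormedSpace ℝ E] [Nontrivial E]
    {H : E → E} {c : ℝ≥0} {m r : ℝ} {x : E} (hH : LipschitzOnWith c H (closedBall 0 r))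
    (hid : ∀ y ∈ sphere 0 r, H y = y) (hx : x ∈ closedBall 0 r) (hm : 0 < m) (hmx : m ≤ ‖H x‖) :
    r ≤ ‖(1 + c / m * (r - ‖x‖)) • H x‖ := by
  have hxr : ‖x‖ ≤ r := mem_closedBall_zero_iff.1 hx
  obtain ⟨y, hy, hxy⟩ := exists_norm_eq_and_norm_sub_eq hxr
  have hnear : r - ‖H x‖ ≤ c * (r - ‖x‖) :=
    calc r - ‖H x‖ = ‖H y‖ - ‖H x‖ := by rw [hid y (mem_sphere_zero_iff_norm.2 hy), hy]
      _ ≤ ‖H y - H x‖ := norm_sub_norm_le _ _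
      _ ≤ c * ‖y - x‖ := hH.norm_sub_le (mem_closedBall_zero_iff.2 hy.le) hx
      _ = c * (r - ‖x‖) := by rw [hxy]
  have hnonneg : 0 ≤ c / m * (r - ‖x‖) :=
    mul_nonneg (by positivity) (sub_nonneg.2 hxr)
  calc r ≤ ‖H x‖ + c * (r - ‖x‖) := by linarith
    _ = ‖H x‖ + c / m * (r - ‖x‖) * m := by field_simp
    _ ≤ ‖H x‖ + c / m * (r - ‖x‖) * ‖H x‖ := by gcongr
    _ = ‖(1 + c / m * (r - ‖x‖)) • H x‖ := by
      rw [norm_smul, Real.norm_of_nonneg (by linarith)]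
      ring

/- A nonvanishing `H` could be stretched by a factor equal to `1` on the sphere until its norm is at
least `r`, and then clamped to a retraction onto the sphere. -/
theorem exists_eq_zero_of_eqOn_sphere {H : (ι → ℝ) → ι → ℝ} {r : ℝ} (hr : 0 < r)
    (hH : LocallyLipschitz H) (hid : ∀ x ∈ sphere 0 r, H x = x) :
    ∃ x ∈ closedBall 0 r, H x = 0 := by
  have hcompact : IsCompact (closedBall (0 : ι → ℝ) r) := isCompact_closedBall _ _
  rcases subsingleton_or_nontrivial (ι → ℝ) with _ | _
  · exact ⟨0, mem_closedBall_self hr.le, Subsingleton.elim _ _⟩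
  by_contra! hne
  obtain ⟨x₀, hx₀, hmin⟩ := hcompact.exists_isMinOn ⟨0, mem_closedBall_self hr.le⟩
    hH.continuous.norm.continuousOn
  have hδ : 0 < ‖H x₀‖ := norm_pos_iff.2 (hne x₀ hx₀)
  obtain ⟨c, hc⟩ := hH.locallyLipschitzOn.exists_lipschitzOnWith_of_compact hcompact
  set stretch : (ι → ℝ) → ℝ := fun x => 1 + c / ‖H x₀‖ * (r - ‖x‖) with hstretch
  have hlip : LocallyLipschitz fun x => clamp r (stretch x • H x) :=
    (lipschitzWith_clamp r).locallyLipschitz.comp <| locallyLipschitz_smul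
      ((LocallyLipschitz.const 1).add <| locallyLipschitz_smul (.const _)
        ((LocallyLipschitz.const r).sub lipschitzWith_one_norm.locallyLipschitz)) hH
  obtain ⟨c', hc'⟩ := hlip.locallyLipschitzOn.exists_lipschitzOnWith_of_compact hcompact
  refine not_mapsTo_sphere_of_lipschitzOnWith hr hc' (fun x hx => ?_) fun x hx =>
    mem_sphere_zero_iff_norm.2 (norm_clamp_of_le_norm hr
      (le_norm_stretch_smul hc hid hx hδ (hmin hx)))
  have hx' : ‖x‖ = r := mem_sphere_zero_iff_norm.1 hx
  simp [hstretch, hx', hid x hx, clamp_of_norm_le]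

theorem exists_fixedPoint_of_locallyLipschitz {k : (ι → ℝ) → ι → ℝ} (hk : LocallyLipschitz k)
    {r : ℝ} (hbound : ∀ x, ‖k x‖ ≤ r) : ∃ x, k x = x := by
  have hr : 0 ≤ r := (norm_nonneg _).trans (hbound 0)
  set cutoff : (ι → ℝ) → ℝ := fun x => min 1 (r + 1 - ‖x‖) with hcutoff
  have hlip : LocallyLipschitz fun x => x - cutoff x • k x :=
    LocallyLipschitz.id.sub <| locallyLipschitz_smul
      (((LocallyLipschitz.const (r + 1)).sub
        lipschitzWith_one_norm.locallyLipschitz).const_min 1) hk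
  obtain ⟨x, hx, hzero⟩ := exists_eq_zero_of_eqOn_sphere (r := r + 1) (by linarith) hlip
    fun x hx => by simp [hcutoff, mem_sphere_zero_iff_norm.1 hx]
  have hnonneg : 0 ≤ cutoff x :=
    le_min zero_le_one (sub_nonneg.2 (mem_closedBall_zero_iff.1 hx))
  have hnorm : ‖x‖ ≤ r :=
    calc ‖x‖ = ‖cutoff x • k x‖ := by rw [← sub_eq_zero.1 hzero]
      _ = cutoff x * ‖k x‖ := by rw [norm_smul, Real.norm_of_nonneg hnonneg]
      _ ≤ 1 * r := mul_le_mul (min_le_left _ _) (hbound x) (norm_nonneg _) zero_le_one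
      _ = r := one_mul r
  have hone : cutoff x = 1 := min_eq_left (by linarith)
  exact ⟨x, by simpa [hone] using (sub_eq_zero.1 hzero).symm⟩

theorem exists_dist_le_of_uniformContinuous {k : (ι → ℝ) → ι → ℝ} (hk : UniformContinuous k)
    {r : ℝ} (hbound : ∀ x, ‖k x‖ ≤ r) {η : ℝ} (hη : 0 < η) :
    ∃ x ∈ closedBall 0 r, dist (k x) x ≤ η := by
  have hr : 0 ≤ r := (norm_nonneg _).trans (hbound 0)
  obtain ⟨g, hg, hdist⟩ := hk.exists_contDiff_dist_le hη
  obtain ⟨x, hx⟩ := exists_fixedPoint_of_locallyLipschitz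
    ((lipschitzWith_clamp r).locallyLipschitz.comp (hg.of_le (mod_cast le_top)).locallyLipschitz)
    fun x => norm_clamp_le hr (g x)
  refine ⟨x, mem_closedBall_zero_iff.2 (hx ▸ norm_clamp_le hr (g x)), ?_⟩
  calc dist (k x) x = dist (clamp r (k x)) (clamp r (g x)) := by
        rw [clamp_of_norm_le (hbound x)]; exact congrArg _ hx.symm
    _ ≤ dist (k x) (g x) := by simpa using (lipschitzWith_clamp r).dist_le_mul (k x) (g x)
    _ ≤ η := by rw [dist_comm]; exact (hdist x).le

theorem exists_fixedPoint_of_continuousOn_closedBall {k : (ι → ℝ) → ι → ℝ} {p : ι → ℝ} {r : ℝ}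
    (hr : 0 ≤ r) (hk : ContinuousOn k (closedBall p r))
    (hmaps : MapsTo k (closedBall p r) (closedBall p r)) : ∃ x ∈ closedBall p r, k x = x := by
  have hmem : ∀ y, p + clamp r y ∈ closedBall p r := fun y => by
    simpa using norm_clamp_le hr y
  set K : (ι → ℝ) → ι → ℝ := fun y => k (p + clamp r y) - p
  have hK : UniformContinuous K := by
    have hcomp := ((isCompact_closedBall p r).uniformContinuousOn_of_continuous hk).comp
      (uniformContinuousOn_univ.2 (uniformContinuous_const.add
        (lipschitzWith_clamp r).uniformContinuous)) fun y _ => hmem y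
    exact (uniformContinuousOn_univ.1 hcomp).sub uniformContinuous_const
  have hbound : ∀ y, ‖K y‖ ≤ r := fun y => by
    simpa [K, dist_eq_norm] using hmaps (hmem y)
  obtain ⟨y, hy, hmin⟩ := (isCompact_closedBall (0 : ι → ℝ) r).exists_isMinOn
    ⟨0, mem_closedBall_self hr⟩ (hK.continuous.dist continuous_id).continuousOn
  have hfix : dist (K y) y ≤ 0 := le_of_forall_pos_le_add fun η hη => by
    obtain ⟨x, hx, hdist⟩ := exists_dist_le_of_uniformContinuous hK hbound hη
    rw [zero_add]
    exact (hmin hx).trans hdist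
  have hclamp : clamp r y = y := clamp_of_norm_le (mem_closedBall_zero_iff.1 hy)
  refine ⟨p + y, hclamp ▸ hmem y, ?_⟩
  simpa [K, hclamp, sub_eq_iff_eq_add'] using dist_le_zero.1 hfix

end Brouwer

/-! ### Zeros of perturbed maps -/

section Zeros

/- The junk value `0` of `fderiv` has determinant `0`, except in dimension `0`, where every map is
differentiable. -/
theorem hasFDerivAt_of_det_fderiv_ne_zero {E : Type*} [NormedAddCommGroup E] [NormedSpace ℝ E]
    [FiniteDimensional ℝ E] {F : E → E} {p : E} (hdet : (fderiv ℝ F p).det ≠ 0) :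
    HasFDerivAt F (fderiv ℝ F p) p := by
  rcases subsingleton_or_nontrivial E with _ | _
  · exact (hasFDerivAt_of_subsingleton F p).differentiableAt.hasFDerivAt
  refine DifferentiableAt.hasFDerivAt (by_contra fun hF => hdet ?_)
  rw [fderiv_zero_of_not_differentiableAt hF]
  have : finrank ℝ E ≠ 0 := finrank_pos.ne'
  exact LinearMap.det_zero''

theorem norm_newton_step_sub_le {E F : Type*} [NormedAddCommGroup E] [NormedSpace ℝ E]
    [NormedAddCommGroup F] [NormedSpace ℝ F] (e : E ≃L[ℝ] F) {p z : E} {a b : F} {η δ : ℝ}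
    (hη : ‖(e.symm : F →L[ℝ] E)‖ * η ≤ 1 / 2) (hδ : 0 ≤ δ) (ha : ‖a - e (z - p)‖ ≤ η * δ)
    (hb : ‖b - a‖ ≤ η * δ) : ‖z - e.symm b - p‖ ≤ δ := by
  have hsplit : z - e.symm b - p = -e.symm ((b - a) + (a - e (z - p))) := by
    rw [sub_add_sub_cancel, map_sub, e.symm_apply_apply]
    abel
  calc ‖z - e.symm b - p‖
      ≤ ‖(e.symm : F →L[ℝ] E)‖ * ‖(b - a) + (a - e (z - p))‖ := by
        rw [hsplit, norm_neg]
        exact (e.symm : F →L[ℝ] E).le_opNorm _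
    _ ≤ ‖(e.symm : F →L[ℝ] E)‖ * (η * δ + η * δ) := by gcongr; exact norm_add_le_of_le hb ha
    _ = 2 * (‖(e.symm : F →L[ℝ] E)‖ * η) * δ := by ring
    _ ≤ δ := by nlinarith

theorem exists_eventually_exists_eq_zero {ι : Type*} [Fintype ι] {F : (ι → ℝ) → ι → ℝ}
    {p : ι → ℝ} {A : (ι → ℝ) →L[ℝ] ι → ℝ} (hF : HasFDerivAt F A p) (hp : F p = 0)
    (hA : A.det ≠ 0) :
    ∃ η > 0, ∀ᶠ δ in 𝓝[>] 0, ∀ Q : (ι → ℝ) → ι → ℝ, ContinuousOn Q (closedBall p δ) →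
      (∀ z ∈ closedBall p δ, ‖Q z - F z‖ ≤ η * δ) → ∃ z ∈ closedBall p δ, Q z = 0 := by
  set e := A.toContinuousLinearEquivOfDetNeZero hA
  set B := (e.symm : (ι → ℝ) →L[ℝ] ι → ℝ)
  set η := 1 / (2 * (‖B‖ + 1))
  have hη : 0 < η := by positivity
  have hBη : ‖B‖ * η ≤ 1 / 2 := by
    rw [mul_one_div, div_le_div_iff₀ (by positivity) two_pos]
    linarith
  obtain ⟨δ₀, hδ₀, hlin⟩ := nhds_basis_closedBall.eventually_iff.1 (hF.isLittleO.def hη)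
  refine ⟨η, hη, ?_⟩
  filter_upwards [Ioo_mem_nhdsGT hδ₀] with δ hδ Q hQ hQF
  have hmaps : MapsTo (fun z => z - B (Q z)) (closedBall p δ) (closedBall p δ) := by
    intro z hz
    have hFz : ‖F z - e (z - p)‖ ≤ η * δ := by
      have h := hlin (closedBall_subset_closedBall hδ.2.le hz)
      rw [hp, sub_zero] at h
      exact h.trans (by gcongr; exact mem_closedBall_iff_norm.1 hz)
    exact mem_closedBall_iff_norm.2 (norm_newton_step_sub_le e hBη hδ.1.le hFz (hQF z hz))
  obtain ⟨z, hz, hfix⟩ := exists_fixedPoint_of_continuousOn_closedBall hδ.1.le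
    (continuousOn_id.sub (B.continuous.comp_continuousOn hQ)) hmaps
  exact ⟨z, hz, e.symm.map_eq_zero_iff.1 (sub_eq_self.1 hfix)⟩

end Zeros

/-! ### Bounded Lipschitz time-dependent fields -/

section Fields

variable {E F : Type*} [NormedAddCommGroup E] [NormedAddCommGroup F] {s : Set E} {K K' : ℝ≥0}

/-- A time-dependent field that, on `s` and uniformly in time, is bounded and Lipschitz, and that is
continuous in time. One constant `K` serves as bound and as Lipschitz constant, so that the
estimates below involve a single parameter. -/
structure BoundedLipschitzOn (K : ℝ≥0) (v : ℝ → E → F) (s : Set E) : Prop where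
  continuous : ∀ x ∈ s, Continuous fun t => v t x
  norm_le : ∀ t, ∀ x ∈ s, ‖v t x‖ ≤ K
  lipschitzOnWith : ∀ t, LipschitzOnWith K (v t) s

namespace BoundedLipschitzOn

variable {v w : ℝ → E → F}

theorem weaken (hv : BoundedLipschitzOn K v s) (hK : K ≤ K') : BoundedLipschitzOn K' v s :=
  ⟨hv.continuous, fun t x hx => (hv.norm_le t x hx).trans (mod_cast hK),
    fun t => (hv.lipschitzOnWith t).weaken hK⟩

theorem of_norm_le {L : ℝ≥0} {C : ℝ} (hcont : ∀ x ∈ s, Continuous fun t => v t x)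
    (hC : ∀ t, ∀ x ∈ s, ‖v t x‖ ≤ C) (hlip : ∀ t, LipschitzOnWith L (v t) s) :
    BoundedLipschitzOn (max C.toNNReal L) v s :=
  ⟨hcont, fun t x hx => (hC t x hx).trans (C.le_coe_toNNReal.trans (mod_cast le_max_left _ _)),
    fun t => (hlip t).weaken (le_max_right _ _)⟩

theorem add (hv : BoundedLipschitzOn K v s) (hw : BoundedLipschitzOn K' w s) :
    BoundedLipschitzOn (K + K') (fun t x => v t x + w t x) s :=
  ⟨fun x hx => (hv.continuous x hx).add (hw.continuous x hx),
    fun t x hx => norm_add_le_of_le (hv.norm_le t x hx) (hw.norm_le t x hx),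
    fun t => (hv.lipschitzOnWith t).add (hw.lipschitzOnWith t)⟩

theorem const_smul [NormedSpace ℝ F] (hv : BoundedLipschitzOn K v s) (c : ℝ) :
    BoundedLipschitzOn (‖c‖₊ * K) (fun t x => c • v t x) s :=
  ⟨fun x hx => (hv.continuous x hx).const_smul c,
    fun t x hx => (norm_smul c (v t x)).trans_le
      (mul_le_mul_of_nonneg_left (hv.norm_le t x hx) (norm_nonneg c)),
    fun t => (lipschitzWith_smul c).comp_lipschitzOnWith (hv.lipschitzOnWith t)⟩

theorem norm_sub_le (hv : BoundedLipschitzOn K v s) {t : ℝ} {x y : E} (hx : x ∈ s) (hy : y ∈ s) :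
    ‖v t x - v t y‖ ≤ K * ‖x - y‖ :=
  (hv.lipschitzOnWith t).norm_sub_le hx hy

end BoundedLipschitzOn

theorem exists_norm_le_of_periodic {v : ℝ → E → F} {T : ℝ} (hT : 0 < T) (hs : IsCompact s)
    (hper : ∀ x ∈ s, Function.Periodic (fun t => v t x) T)
    (hcont : ContinuousOn (Function.uncurry v) (univ ×ˢ s)) :
    ∃ C, ∀ t, ∀ x ∈ s, ‖v t x‖ ≤ C := by
  obtain ⟨C, hC⟩ := ((isCompact_Icc (a := (0 : ℝ)) (b := T)).prod hs).exists_bound_of_continuousOn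
    (hcont.mono (prod_mono_left (subset_univ _)))
  refine ⟨C, fun t x hx => ?_⟩
  obtain ⟨u, hu, htu⟩ := (hper x hx).exists_mem_Ico₀ hT t
  simpa only [htu, Function.uncurry_apply_pair] using hC (u, x) ⟨Ico_subset_Icc_self hu, hx⟩

theorem exists_boundedLipschitzOn_of_periodic {v : ℝ → E → F} {T : ℝ} (hT : 0 < T)
    (hs : IsCompact s) (hper : ∀ x ∈ s, Function.Periodic (fun t => v t x) T)
    (hcont : ∀ x ∈ s, Continuous fun t => v t x) {L : ℝ≥0}
    (hlip : ∀ t, LipschitzOnWith L (v t) s) : ∃ K, BoundedLipschitzOn K v s := by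
  have hjoint : ContinuousOn (Function.uncurry v) (univ ×ˢ s) :=
    continuousOn_prod_of_continuousOn_lipschitzOnWith' _ L (fun t _ => hlip t)
      fun x hx => (hcont x hx).continuousOn
  obtain ⟨C, hC⟩ := exists_norm_le_of_periodic hT hs hper hjoint
  exact ⟨_, .of_norm_le hcont hC hlip⟩

end Fields

/-! ### Derivatives of time-dependent fields -/

section Derivative

variable {E F : Type*} [NormedAddCommGroup E] [NormedSpace ℝ E] [NormedAddCommGroup F]
  [NormedSpace ℝ F] {s : Set E} {L : ℝ≥0}

theorem norm_sub_sub_fderiv_le {f : E → F} (hs : Convex ℝ s)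
    (hf : ∀ x ∈ s, DifferentiableAt ℝ f x) (hL : LipschitzOnWith L (fderiv ℝ f) s) {x y : E}
    (hx : x ∈ s) (hy : y ∈ s) : ‖f y - f x - fderiv ℝ f x (y - x)‖ ≤ L * ‖y - x‖ ^ 2 := by
  have hseg : segment ℝ x y ⊆ s := hs.segment_subset hx hy
  have hmvt := Convex.norm_image_sub_le_of_norm_hasFDerivWithin_le' (C := L * ‖y - x‖)
    (fun z hz => (hf z (hseg hz)).hasFDerivAt.hasFDerivWithinAt)
    (fun z hz => (hL.norm_sub_le (hseg hz) hx).trans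
      (by gcongr; exact norm_sub_le_of_mem_segment hz))
    (convex_segment x y) (left_mem_segment ℝ x y) (right_mem_segment ℝ x y)
  exact hmvt.trans_eq (by ring)

theorem norm_slope_sub_fderiv_le {f : E → F} (hs : Convex ℝ s)
    (hf : ∀ x ∈ s, DifferentiableAt ℝ f x) (hL : LipschitzOnWith L (fderiv ℝ f) s) {x u : E}
    {h : ℝ} (hh : 0 < h) (hx : x ∈ s) (hxu : x + h • u ∈ s) :
    ‖h⁻¹ • (f (x + h • u) - f x) - fderiv ℝ f x u‖ ≤ L * h * ‖u‖ ^ 2 := by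
  have htaylor := norm_sub_sub_fderiv_le hs hf hL hx hxu
  rw [add_sub_cancel_left, map_smul, norm_smul, Real.norm_of_nonneg hh.le] at htaylor
  calc ‖h⁻¹ • (f (x + h • u) - f x) - fderiv ℝ f x u‖
      = h⁻¹ * ‖f (x + h • u) - f x - h • fderiv ℝ f x u‖ := by
        rw [← Real.norm_of_nonneg (inv_nonneg.2 hh.le), ← norm_smul, smul_sub h⁻¹ (f _ - f x),
          inv_smul_smul₀ hh.ne', Real.norm_of_nonneg (inv_nonneg.2 hh.le)]
    _ ≤ h⁻¹ * (L * (h * ‖u‖) ^ 2) := by gcongr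
    _ = L * h * ‖u‖ ^ 2 := by field_simp

/- The Lipschitz bound on the derivative makes the difference quotients converge uniformly in the
parameter `t`. -/
theorem continuous_fderiv_of_lipschitzOnWith [FiniteDimensional ℝ E] {X : Type*}
    [TopologicalSpace X] {f : X → E → F} {x : E} (hs : s ∈ 𝓝 x)
    (hf : ∀ t, ∀ y ∈ s, DifferentiableAt ℝ (f t) y)
    (hL : ∀ t, LipschitzOnWith L (fderiv ℝ (f t)) s) (hcont : ∀ y ∈ s, Continuous fun t => f t y) :
    Continuous fun t => fderiv ℝ (f t) x := by
  refine continuous_clm_apply.2 fun u => ?_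
  obtain ⟨r, hr, hball⟩ := Metric.mem_nhds_iff.1 hs
  have hline : Tendsto (fun h : ℝ => x + h • u) (𝓝[>] 0) (𝓝 x) :=
    Tendsto.mono_left (by simpa using (Continuous.tendsto (by fun_prop) 0 :
      Tendsto (fun h : ℝ => x + h • u) (𝓝 0) _)) nhdsWithin_le_nhds
  have herror : Tendsto (fun h : ℝ => L * h * ‖u‖ ^ 2) (𝓝[>] 0) (𝓝 0) :=
    Tendsto.mono_left (by simpa using (Continuous.tendsto (by fun_prop) 0 :
      Tendsto (fun h : ℝ => L * h * ‖u‖ ^ 2) (𝓝 0) _)) nhdsWithin_le_nhds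
  have hmem := hline.eventually (ball_mem_nhds x hr)
  have hunif : TendstoUniformly (fun (h : ℝ) t => h⁻¹ • (f t (x + h • u) - f t x))
      (fun t => fderiv ℝ (f t) x u) (𝓝[>] 0) := by
    refine Metric.tendstoUniformly_iff.2 fun η hη => ?_
    filter_upwards [hmem, herror.eventually (gt_mem_nhds hη), self_mem_nhdsWithin]
      with h hxu hlt hh t
    rw [dist_comm, dist_eq_norm]
    exact (norm_slope_sub_fderiv_le (convex_ball x r) (fun y hy => hf t y (hball hy))
      ((hL t).mono hball) hh (mem_ball_self hr) hxu).trans_lt hlt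
  refine hunif.continuous (hmem.mono fun h hxu => ?_).frequently
  exact ((hcont _ (hball hxu)).sub (hcont x (mem_of_mem_nhds hs))).const_smul h⁻¹

end Derivative

/-! ### Integral curves on a period -/

section Flow

variable {E : Type*} [NormedAddCommGroup E] [NormedSpace ℝ E] {V : ℝ → E → E} {T : ℝ}

theorem mem_closedBall_of_isIntegralCurveOn {γ : ℝ → E} {p : E} {r R C : ℝ} (hT : 0 < T)
    (hbound : ∀ t ∈ Ico 0 T, ∀ x ∈ closedBall p R, ‖V t x‖ ≤ C) (hCT : C * T < R - r)
    (hC : 0 ≤ C) (hγ : IsIntegralCurveOn γ V (Icc 0 T)) (hγ0 : γ 0 ∈ closedBall p r) {t : ℝ}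
    (ht : t ∈ Icc 0 T) : γ t ∈ closedBall p R := by
  set q := (R - r) / T
  have hCq : C < q := (lt_div_iff₀ hT).2 hCT
  have hqT : q * T = R - r := div_mul_cancel₀ _ hT.ne'
  have hfence : ∀ u ≤ T, r + q * u ≤ R := fun u hu => by nlinarith
  have hline : ∀ u, HasDerivAt (fun u => r + q * u) q u := fun u => by
    simpa using ((hasDerivAt_id u).const_mul q).const_add r
  have hnorm := image_norm_le_of_norm_deriv_right_lt_deriv_boundary (f := fun u => γ u - p)
    (hγ.continuousOn.sub continuousOn_const)
    (fun u hu => ((hγ u (Ico_subset_Icc_self hu)).sub_const p).mono_of_mem_nhdsWithin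
      (mem_of_superset (Icc_mem_nhdsGE hu.2) (Icc_subset_Icc_left hu.1)))
    (by simpa [dist_eq_norm] using hγ0) hline
    (fun u hu heq => (hbound u hu _ (mem_closedBall_iff_norm.2
      (heq.trans_le (hfence u hu.2.le)))).trans_lt hCq) ht
  exact mem_closedBall_iff_norm.2 (hnorm.trans (hfence t ht.2))

theorem BoundedLipschitzOn.exists_flow [CompleteSpace E] {K : ℝ≥0} {p : E} {r R : ℝ}
    (hV : BoundedLipschitzOn K V (closedBall p R)) (hT : 0 < T) (hr : 0 ≤ r)
    (hKT : K * T < R - r) :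
    ∃ α : E → ℝ → E, (∀ z ∈ closedBall p r, α z 0 = z ∧ IsIntegralCurveOn (α z) V (Icc 0 T) ∧
      ∀ t ∈ Icc 0 T, α z t ∈ closedBall p R) ∧ ContinuousOn (fun z => α z T) (closedBall p r) := by
  have hR : 0 ≤ R := by linarith [mul_nonneg K.coe_nonneg hT.le]
  lift r to ℝ≥0 using hr
  lift R to ℝ≥0 using hR
  have hPL : IsPicardLindelof V (⟨0, le_rfl, hT.le⟩ : Icc 0 T) p R r K K :=
    ⟨fun t _ => hV.lipschitzOnWith t, fun x hx => (hV.continuous x hx).continuousOn,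
      fun t _ => hV.norm_le t, by simpa [max_eq_left hT.le] using hKT.le⟩
  obtain ⟨α, hα, L, hL⟩ := hPL.exists_forall_mem_closedBall_eq_hasDerivWithinAt_lipschitzOnWith
  refine ⟨α, fun z hz => ?_, (hL T (right_mem_Icc.2 hT.le)).continuousOn⟩
  obtain ⟨hα0, hcurve⟩ := hα z hz
  exact ⟨hα0, hcurve, fun t ht => mem_closedBall_of_isIntegralCurveOn hT
    (fun t _ => hV.norm_le t) hKT K.coe_nonneg hcurve (hα0.symm ▸ hz) ht⟩

end Flow

section PeriodicExtension

variable {E : Type*} {T : ℝ} {x : ℝ → E}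

/-- `φ` is a `T`-periodic solution of `ẋ = V(t, x)` that stays in `s`. -/
structure IsPeriodicSolution [NormedAddCommGroup E] [NormedSpace ℝ E] (V : ℝ → E → E) (T : ℝ)
    (s : Set E) (φ : ℝ → E) : Prop where
  mem : ∀ t, φ t ∈ s
  isIntegralCurve : IsIntegralCurve φ V
  periodic : Function.Periodic φ T

/-- The `T`-periodic function that agrees with `x` on `[0, T)`. -/
noncomputable def periodicExtension (hT : 0 < T) (x : ℝ → E) (t : ℝ) : E :=
  x (toIcoMod hT 0 t)

theorem periodicExtension_zero (hT : 0 < T) : periodicExtension hT x 0 = x 0 := by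
  rw [periodicExtension, toIcoMod_apply_left]

theorem periodicExtension_apply_of_sub_zsmul_mem_Icc (hT : 0 < T) (hxT : x T = x 0) {m : ℤ}
    {t : ℝ} (ht : t - m • T ∈ Icc 0 T) : periodicExtension hT x t = x (t - m • T) := by
  rw [periodicExtension, ← toIcoMod_sub_zsmul hT 0 t m]
  rcases ht.2.eq_or_lt with heq | hlt
  · have hmod : toIcoMod hT 0 T = 0 := by simpa using toIcoMod_apply_right hT 0
    rw [heq, hxT, hmod]
  · rw [(toIcoMod_eq_self hT).2 ⟨ht.1, by rwa [zero_add]⟩]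

variable [NormedAddCommGroup E] [NormedSpace ℝ E] {V : ℝ → E → E}

theorem isIntegralCurveOn_periodicExtension (hT : 0 < T)
    (hV : ∀ y, Function.Periodic (fun t => V t y) T) (hx : IsIntegralCurveOn x V (Icc 0 T))
    (hxT : x T = x 0) (m : ℤ) :
    IsIntegralCurveOn (periodicExtension hT x) V (Icc (m • T) (m • T + T)) := by
  have hshift : ∀ t ∈ Icc (m • T) (m • T + T), t - m • T ∈ Icc 0 T := fun t ht =>
    ⟨by linarith [ht.1], by linarith [ht.2]⟩
  have heq : EqOn (periodicExtension hT x) (fun t => x (t - m • T)) (Icc (m • T) (m • T + T)) :=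
    fun t ht => periodicExtension_apply_of_sub_zsmul_mem_Icc hT hxT (hshift t ht)
  intro t ht
  rw [heq ht, ← (hV _).sub_zsmul_eq m (x := t)]
  refine HasDerivWithinAt.congr ?_ heq (heq ht)
  simpa [Function.comp_def] using (hx _ (hshift t ht)).scomp t
    ((hasDerivAt_id t).sub_const (m • T)).hasDerivWithinAt hshift

theorem isIntegralCurve_periodicExtension (hT : 0 < T)
    (hV : ∀ y, Function.Periodic (fun t => V t y) T) (hx : IsIntegralCurveOn x V (Icc 0 T))
    (hxT : x T = x 0) : IsIntegralCurve (periodicExtension hT x) V := by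
  intro t
  set m := toIcoDiv hT 0 t
  have hm : t - m • T ∈ Ico 0 T := by simpa only [toIcoMod, zero_add] using toIcoMod_mem_Ico hT 0 t
  have hprev : (m - 1) • T = m • T - T := by rw [sub_smul, one_smul]
  have hleft := isIntegralCurveOn_periodicExtension hT hV hx hxT (m - 1)
  have hright := isIntegralCurveOn_periodicExtension hT hV hx hxT m
  rw [hprev, sub_add_cancel] at hleft
  have hmem : t ∈ Icc (m • T) (m • T + T) := ⟨by linarith [hm.1], by linarith [hm.2]⟩
  rcases hm.1.eq_or_lt with heq | hlt
  · refine ((hleft t ⟨by linarith, by linarith⟩).union (hright t hmem)).hasDerivAt ?_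
    rw [Icc_union_Icc_eq_Icc (by linarith) (by linarith)]
    exact Icc_mem_nhds (by linarith) (by linarith)
  · exact (hright t hmem).hasDerivAt (Icc_mem_nhds (by linarith) (by linarith [hm.2]))

theorem isPeriodicSolution_periodicExtension {s : Set E} (hT : 0 < T)
    (hV : ∀ y, Function.Periodic (fun t => V t y) T) (hx : IsIntegralCurveOn x V (Icc 0 T))
    (hxs : ∀ t ∈ Icc 0 T, x t ∈ s) (hxT : x T = x 0) :
    IsPeriodicSolution V T s (periodicExtension hT x) where
  mem t := by
    have hmod : toIcoMod hT 0 t ∈ Ico 0 T := by simpa using toIcoMod_mem_Ico hT 0 t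
    exact hxs _ (Ico_subset_Icc_self hmod)
  isIntegralCurve := isIntegralCurve_periodicExtension hT hV hx hxT
  periodic t := by simp only [periodicExtension, toIcoMod_add_right]

end PeriodicExtension

/-! ### The displacement over a period -/

section Displacement

variable {E : Type*} [NormedAddCommGroup E] [NormedSpace ℝ E]

/-- The right-hand side `ε f + ε² g + ε³ r` of the equation, for a fixed value of `ε`; the remainder
`r` is the section `R(·, ·, ε)`. -/
def perturbedField (ε : ℝ) (f g r : ℝ → E → E) (t : ℝ) (x : E) : E :=
  ε • f t x + ε ^ 2 • g t x + ε ^ 3 • r t x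

/-- The coefficient `y¹(t, x) = ∫₀ᵗ f(s, x) ds` of `ε` in the solution that starts at `x`. -/
noncomputable def firstCorrection (f : ℝ → E → E) (t : ℝ) (x : E) : E :=
  ∫ s in (0 : ℝ)..t, f s x

/-- The second-order averaged field `f¹⁰ + g⁰`, whose zeros are the candidates for limits of
periodic solutions. -/
noncomputable def averagedField (T : ℝ) (f g : ℝ → E → E) (x : E) : E :=
  (1 / T) • (∫ t in (0 : ℝ)..T, fderiv ℝ (f t) x (firstCorrection f t x)) +
    (1 / T) • ∫ t in (0 : ℝ)..T, g t x

/-- The regularity on `s` of the coefficients `f`, `g`, `r` of the perturbed field that the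
expansion of the displacement depends on, with one constant for all of them. -/
structure AveragingBounds (K : ℝ≥0) (f g r : ℝ → E → E) (s : Set E) : Prop where
  differentiableAt : ∀ t, ∀ x ∈ s, DifferentiableAt ℝ (f t) x
  bounds_fderiv : BoundedLipschitzOn K (fun t => fderiv ℝ (f t)) s
  bounds_first : BoundedLipschitzOn K f s
  bounds_second : BoundedLipschitzOn K g s
  bounds_remainder : BoundedLipschitzOn K r s

theorem periodic_perturbedField {f g r : ℝ → E → E} {T : ℝ} {x : E}
    (hf : Function.Periodic (fun t => f t x) T) (hg : Function.Periodic (fun t => g t x) T)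
    (hr : Function.Periodic (fun t => r t x) T) (ε : ℝ) :
    Function.Periodic (fun t => perturbedField ε f g r t x) T :=
  ((hf.smul ε).add (hg.smul (ε ^ 2))).add (hr.smul (ε ^ 3))

theorem firstCorrection_zero (f : ℝ → E → E) (x : E) : firstCorrection f 0 x = 0 :=
  intervalIntegral.integral_same

theorem hasDerivAt_firstCorrection [CompleteSpace E] {f : ℝ → E → E} {x : E}
    (hf : Continuous fun t => f t x) (t : ℝ) :
    HasDerivAt (fun t => firstCorrection f t x) (f t x) t :=
  (hf.integral_hasStrictDerivAt 0 t).hasDerivAt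

theorem norm_le_mul_of_norm_deriv_le {u u' : ℝ → E} {C T : ℝ}
    (hu : ∀ t ∈ Icc 0 T, HasDerivWithinAt u (u' t) (Icc 0 T) t) (hu0 : u 0 = 0)
    (hC : ∀ t ∈ Icc 0 T, ‖u' t‖ ≤ C) {t : ℝ} (ht : t ∈ Icc 0 T) : ‖u t‖ ≤ C * T := by
  have hmvt := norm_image_sub_le_of_norm_deriv_le_segment' hu
    (fun s hs => hC s (Ico_subset_Icc_self hs)) t ht
  rw [hu0, sub_zero, sub_zero] at hmvt
  exact hmvt.trans (mul_le_mul_of_nonneg_left ht.2 ((norm_nonneg _).trans (hC t ht)))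

namespace AveragingBounds

variable {K : ℝ≥0} {f g r : ℝ → E → E} {s : Set E} (h : AveragingBounds K f g r s)
include h

theorem continuous_integrand [CompleteSpace E] {x : E} (hx : x ∈ s) :
    Continuous fun t => fderiv ℝ (f t) x (firstCorrection f t x) :=
  (h.bounds_fderiv.continuous x hx).clm_apply <| continuous_iff_continuousAt.2 fun t =>
    (hasDerivAt_firstCorrection (h.bounds_first.continuous x hx) t).continuousAt

theorem integral_eq_smul_averagedField [CompleteSpace E] {T : ℝ} (hT : T ≠ 0) {x : E}
    (hx : x ∈ s) :
    ∫ t in (0 : ℝ)..T, (fderiv ℝ (f t) x (firstCorrection f t x) + g t x) =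
      T • averagedField T f g x := by
  rw [intervalIntegral.integral_add ((h.continuous_integrand hx).intervalIntegrable _ _)
    ((h.bounds_second.continuous x hx).intervalIntegrable _ _), averagedField, ← smul_add,
    smul_smul, mul_one_div_cancel hT, one_smul]

variable {ε T : ℝ}

theorem boundedLipschitzOn_perturbedField (hε : 0 ≤ ε) (hε1 : ε ≤ 1) :
    BoundedLipschitzOn (3 * ‖ε‖₊ * K) (perturbedField ε f g r) s := by
  have hε1' : ‖ε‖₊ ≤ 1 := by rwa [← NNReal.coe_le_coe, coe_nnnorm, Real.norm_of_nonneg hε]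
  have hle : ∀ k ≠ 0, ‖ε ^ k‖₊ * K ≤ ‖ε‖₊ * K := fun k hk => by
    rw [nnnorm_pow]
    gcongr
    exact pow_le_of_le_one zero_le hε1' hk
  refine (((h.bounds_first.const_smul ε).add (h.bounds_second.const_smul (ε ^ 2))).add
    (h.bounds_remainder.const_smul (ε ^ 3))).weaken ?_
  calc ‖ε‖₊ * K + ‖ε ^ 2‖₊ * K + ‖ε ^ 3‖₊ * K
      ≤ ‖ε‖₊ * K + ‖ε‖₊ * K + ‖ε‖₊ * K :=
        add_le_add_three le_rfl (hle 2 two_ne_zero) (hle 3 three_ne_zero)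
    _ = 3 * ‖ε‖₊ * K := by ring

variable {x : ℝ → E} (hε : 0 ≤ ε) (hε1 : ε ≤ 1)
  (hx : IsIntegralCurveOn x (perturbedField ε f g r) (Icc 0 T)) (hxs : ∀ t ∈ Icc 0 T, x t ∈ s)
include hε hε1 hx hxs

theorem norm_sub_initial_le {t : ℝ} (ht : t ∈ Icc 0 T) : ‖x t - x 0‖ ≤ 3 * K * T * ε := by
  have hspeed := h.boundedLipschitzOn_perturbedField hε hε1
  have hmvt := norm_le_mul_of_norm_deriv_le (fun t ht => (hx t ht).sub_const (x 0)) (sub_self _)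
    (fun t ht => hspeed.norm_le t (x t) (hxs t ht)) ht
  refine hmvt.trans_eq ?_
  push_cast
  rw [Real.norm_of_nonneg hε]
  ring

theorem norm_perturbedField_sub_smul_le {t : ℝ} (ht : t ∈ Icc 0 T) :
    ‖perturbedField ε f g r t (x t) - ε • f t (x 0)‖ ≤ K * (3 * K * T + 2) * ε ^ 2 := by
  have hx0 : x 0 ∈ s := hxs 0 ⟨le_rfl, ht.1.trans ht.2⟩
  have hfirst : ‖f t (x t) - f t (x 0)‖ ≤ K * (3 * K * T * ε) :=
    (h.bounds_first.norm_sub_le (hxs t ht) hx0).trans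
      (by gcongr; exact h.norm_sub_initial_le hε hε1 hx hxs ht)
  have hε3 : ε ^ 3 ≤ ε ^ 2 := pow_le_pow_of_le_one hε hε1 (by norm_num)
  calc ‖perturbedField ε f g r t (x t) - ε • f t (x 0)‖
      = ‖ε • (f t (x t) - f t (x 0)) + ε ^ 2 • g t (x t) + ε ^ 3 • r t (x t)‖ := by
        congr 1
        rw [perturbedField]
        module
    _ ≤ ‖ε • (f t (x t) - f t (x 0))‖ + ‖ε ^ 2 • g t (x t)‖ + ‖ε ^ 3 • r t (x t)‖ :=
        norm_add₃_le
    _ = ε * ‖f t (x t) - f t (x 0)‖ + ε ^ 2 * ‖g t (x t)‖ + ε ^ 3 * ‖r t (x t)‖ := by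
        simp only [norm_smul, norm_pow, Real.norm_of_nonneg hε]
    _ ≤ ε * (K * (3 * K * T * ε)) + ε ^ 2 * K + ε ^ 2 * K := by
        gcongr
        · exact h.bounds_second.norm_le t _ (hxs t ht)
        · exact h.bounds_remainder.norm_le t _ (hxs t ht)
    _ = K * (3 * K * T + 2) * ε ^ 2 := by ring

theorem norm_sub_firstCorrection_le [CompleteSpace E] {t : ℝ} (ht : t ∈ Icc 0 T) :
    ‖x t - x 0 - ε • firstCorrection f t (x 0)‖ ≤ K * T * (3 * K * T + 2) * ε ^ 2 := by
  have hx0 : x 0 ∈ s := hxs 0 ⟨le_rfl, ht.1.trans ht.2⟩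
  have hderiv : ∀ u ∈ Icc 0 T, HasDerivWithinAt
      (fun u => x u - x 0 - ε • firstCorrection f u (x 0))
      (perturbedField ε f g r u (x u) - ε • f u (x 0)) (Icc 0 T) u := fun u hu =>
    ((hx u hu).sub_const (x 0)).sub ((hasDerivAt_firstCorrection
      (h.bounds_first.continuous _ hx0) u).const_smul ε).hasDerivWithinAt
  have hmvt := norm_le_mul_of_norm_deriv_le hderiv (by simp [firstCorrection_zero])
    (fun u hu => h.norm_perturbedField_sub_smul_le hε hε1 hx hxs hu) ht
  exact hmvt.trans_eq (by ring)

theorem norm_perturbedField_sub_smul_sub_le [CompleteSpace E] (hs : Convex ℝ s) {t : ℝ}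
    (ht : t ∈ Icc 0 T) :
    ‖perturbedField ε f g r t (x t) - ε • f t (x 0) -
      ε ^ 2 • (fderiv ℝ (f t) (x 0) (firstCorrection f t (x 0)) + g t (x 0))‖ ≤
        K * (12 * K ^ 2 * T ^ 2 + 5 * K * T + 1) * ε ^ 3 := by
  set z := x 0
  set y := firstCorrection f t z
  set A := fderiv ℝ (f t) z
  have hz : z ∈ s := hxs 0 ⟨le_rfl, ht.1.trans ht.2⟩
  have hxt : x t ∈ s := hxs t ht
  have hdist : ‖x t - z‖ ≤ 3 * K * T * ε := h.norm_sub_initial_le hε hε1 hx hxs ht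
  have htaylor : ‖f t (x t) - f t z - A (x t - z)‖ ≤ K * (3 * K * T * ε) ^ 2 :=
    (norm_sub_sub_fderiv_le hs (h.differentiableAt t) (h.bounds_fderiv.lipschitzOnWith t) hz
      hxt).trans (by gcongr)
  have hlinear : ‖A (x t - z - ε • y)‖ ≤ K * (K * T * (3 * K * T + 2) * ε ^ 2) :=
    A.le_of_opNorm_le_of_le (h.bounds_fderiv.norm_le t z hz)
      (h.norm_sub_firstCorrection_le hε hε1 hx hxs ht)
  have hsecond : ‖g t (x t) - g t z‖ ≤ K * (3 * K * T * ε) :=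
    (h.bounds_second.norm_sub_le hxt hz).trans (by gcongr)
  calc ‖perturbedField ε f g r t (x t) - ε • f t z - ε ^ 2 • (A y + g t z)‖
      = ‖ε • (f t (x t) - f t z - A (x t - z)) + ε • A (x t - z - ε • y) +
          (ε ^ 2 • (g t (x t) - g t z) + ε ^ 3 • r t (x t))‖ := by
        congr 1
        rw [perturbedField, map_sub A (x t - z), map_smul]
        module
    _ ≤ ε * ‖f t (x t) - f t z - A (x t - z)‖ + ε * ‖A (x t - z - ε • y)‖ +
          (ε ^ 2 * ‖g t (x t) - g t z‖ + ε ^ 3 * ‖r t (x t)‖) := by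
        refine norm_add_le_of_le (norm_add_le_of_le ?_ ?_) (norm_add_le_of_le ?_ ?_) <;>
          simp only [norm_smul, norm_pow, Real.norm_of_nonneg hε, le_refl]
    _ ≤ ε * (K * (3 * K * T * ε) ^ 2) + ε * (K * (K * T * (3 * K * T + 2) * ε ^ 2)) +
          (ε ^ 2 * (K * (3 * K * T * ε)) + ε ^ 3 * K) := by
        gcongr
        exact h.bounds_remainder.norm_le t _ hxt
    _ = K * (12 * K ^ 2 * T ^ 2 + 5 * K * T + 1) * ε ^ 3 := by ring

theorem norm_displacement_sub_le [CompleteSpace E] (hs : Convex ℝ s) (hT : 0 < T)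
    (hmean : ∫ t in (0 : ℝ)..T, f t (x 0) = 0) :
    ‖x T - x 0 - (ε ^ 2 * T) • averagedField T f g (x 0)‖ ≤
      ε ^ 2 * T * (K * (12 * K ^ 2 * T ^ 2 + 5 * K * T + 1) * ε) := by
  have hx0 : x 0 ∈ s := hxs 0 (left_mem_Icc.2 hT.le)
  set a : ℝ → E := fun t => fderiv ℝ (f t) (x 0) (firstCorrection f t (x 0)) + g t (x 0)
  have ha : Continuous a := (h.continuous_integrand hx0).add (h.bounds_second.continuous _ hx0)
  have hderiv : ∀ t ∈ Icc 0 T, HasDerivWithinAt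
      (fun t => x t - x 0 - ε • firstCorrection f t (x 0) - ε ^ 2 • ∫ u in (0 : ℝ)..t, a u)
      (perturbedField ε f g r t (x t) - ε • f t (x 0) - ε ^ 2 • a t) (Icc 0 T) t := fun t ht =>
    (((hx t ht).sub_const (x 0)).sub ((hasDerivAt_firstCorrection
      (h.bounds_first.continuous _ hx0) t).const_smul ε).hasDerivWithinAt).sub
      ((ha.integral_hasStrictDerivAt 0 t).hasDerivAt.const_smul (ε ^ 2)).hasDerivWithinAt
  have hmvt := norm_le_mul_of_norm_deriv_le hderiv (by simp [firstCorrection_zero])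
    (fun t ht => h.norm_perturbedField_sub_smul_sub_le hε hε1 hx hxs hs ht) (right_mem_Icc.2 hT.le)
  have hyT : firstCorrection f T (x 0) = 0 := hmean
  rw [hyT, smul_zero, sub_zero, h.integral_eq_smul_averagedField hT.ne' hx0, smul_smul] at hmvt
  exact hmvt.trans_eq (by ring)

end AveragingBounds

end Displacement

/-! ### Periodic solutions near a nondegenerate zero of the averaged field -/

section Periodic

theorem AveragingBounds.exists_timeMap {E : Type*} [NormedAddCommGroup E] [NormedSpace ℝ E]
    [CompleteSpace E] {K : ℝ≥0} {f g r : ℝ → E → E} {p : E} {ρ σ ε T : ℝ}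
    (h : AveragingBounds K f g r (closedBall p ρ)) (hT : 0 < T) (hσ : 0 ≤ σ) (hε : 0 ≤ ε)
    (hε1 : ε ≤ 1) (hsmall : 3 * ε * K * T < ρ - σ)
    (hper : ∀ y, Function.Periodic (fun t => perturbedField ε f g r t y) T)
    (hmean : ∀ z ∈ closedBall p ρ, ∫ t in (0 : ℝ)..T, f t z = 0) :
    ∃ P : E → E, ContinuousOn P (closedBall p σ) ∧ ∀ z ∈ closedBall p σ,
      ‖P z - z - (ε ^ 2 * T) • averagedField T f g z‖ ≤
        ε ^ 2 * T * (K * (12 * K ^ 2 * T ^ 2 + 5 * K * T + 1) * ε) ∧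
      (P z = z → ∃ φ, φ 0 = z ∧
        IsPeriodicSolution (perturbedField ε f g r) T (closedBall p ρ) φ) := by
  have hfield := h.boundedLipschitzOn_perturbedField hε hε1
  obtain ⟨α, hα, hcont⟩ := hfield.exists_flow hT hσ
    (by simpa [Real.norm_of_nonneg hε, abs_of_nonneg hε] using hsmall)
  refine ⟨fun z => α z T, hcont, fun z hz => ?_⟩
  obtain ⟨hα0, hcurve, hmem⟩ := hα z hz
  have hzρ : α z 0 ∈ closedBall p ρ := hmem 0 (left_mem_Icc.2 hT.le)
  constructor
  · simpa only [hα0] using h.norm_displacement_sub_le hε hε1 hcurve hmem (convex_closedBall p ρ)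
      hT (hmean _ hzρ)
  · exact fun hfix => ⟨periodicExtension hT (α z), (periodicExtension_zero hT).trans hα0,
      isPeriodicSolution_periodicExtension hT hper hcurve hmem (hfix.trans hα0.symm)⟩

theorem norm_inv_smul_sub_le {E : Type*} [NormedAddCommGroup E] [NormedSpace ℝ E] {a b : E}
    {c δ : ℝ} (hc : 0 < c) (h : ‖a - c • b‖ ≤ c * δ) : ‖c⁻¹ • a - b‖ ≤ δ := by
  have hfactor : c⁻¹ • a - b = c⁻¹ • (a - c • b) := by rw [smul_sub, inv_smul_smul₀ hc.ne']
  rwa [hfactor, norm_smul, Real.norm_of_nonneg (inv_nonneg.2 hc.le), inv_mul_le_iff₀ hc]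

theorem tendsto_const_mul_nhdsGT_zero (c : ℝ) :
    Tendsto (fun ε => c * ε) (𝓝[>] 0) (𝓝 0) :=
  ((continuous_const_mul c).tendsto' 0 0 (mul_zero c)).mono_left nhdsWithin_le_nhds

/- The zero is sought in the cube of radius `D ε`, with `D` so large that the `O(ε)` distance
between the rescaled displacement and the averaged field is admissible there. -/
theorem exists_eventually_isPeriodicSolution {ι : Type*} [Fintype ι] {f g : ℝ → (ι → ℝ) → ι → ℝ}
    {p : ι → ℝ} {ρ T : ℝ} (hT : 0 < T) (hρ : 0 < ρ)
    (hf : ∀ y, Function.Periodic (fun t => f t y) T)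
    (hg : ∀ y, Function.Periodic (fun t => g t y) T)
    (hmean : ∀ z ∈ closedBall p ρ, ∫ t in (0 : ℝ)..T, f t z = 0) (hp : averagedField T f g p = 0)
    (hdet : (fderiv ℝ (averagedField T f g) p).det ≠ 0) (K : ℝ≥0) :
    ∃ D, ∀ᶠ ε in 𝓝[>] 0, ∀ r, AveragingBounds K f g r (closedBall p ρ) →
      (∀ y, Function.Periodic (fun t => r t y) T) →
      ∃ φ, IsPeriodicSolution (perturbedField ε f g r) T (closedBall p ρ) φ ∧
        ‖φ 0 - p‖ ≤ D * ε := by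
  obtain ⟨η, hη, hzero⟩ :=
    exists_eventually_exists_eq_zero (hasFDerivAt_of_det_fderiv_ne_zero hdet) hp hdet
  set C : ℝ := K * (12 * K ^ 2 * T ^ 2 + 5 * K * T + 1)
  set D := C / η + 1
  have hD : 0 < D := by positivity
  have hCD : C ≤ η * D := by
    rw [mul_add, mul_div_cancel₀ C hη.ne']
    linarith
  have hradius : Tendsto (fun ε => D * ε) (𝓝[>] 0) (𝓝[>] 0) :=
    tendsto_nhdsWithin_iff.2 ⟨tendsto_const_mul_nhdsGT_zero D,
      eventually_mem_nhdsWithin.mono fun ε hε => mul_pos hD hε⟩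
  refine ⟨D, ?_⟩
  have hsmaller : ∀ c : ℝ, ∀ᶠ ε in 𝓝[>] 0, c * ε < ρ / 2 := fun c =>
    (tendsto_const_mul_nhdsGT_zero c).eventually (gt_mem_nhds (half_pos hρ))
  filter_upwards [hradius.eventually hzero, hsmaller D, hsmaller (3 * K * T),
    Ioo_mem_nhdsGT one_pos] with ε hzeroε hDε hKε hε r h hr
  have hεpos : 0 < ε := hε.1
  have hc : 0 < ε ^ 2 * T := by positivity
  have hsub : closedBall p (D * ε) ⊆ closedBall p (ρ / 2) := closedBall_subset_closedBall hDε.le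
  obtain ⟨P, hPcont, hP⟩ := h.exists_timeMap hT (half_pos hρ).le hε.1.le hε.2.le (by linarith)
    (fun y => periodic_perturbedField (hf y) (hg y) (hr y) ε) hmean
  have hQcont : ContinuousOn (fun z => (ε ^ 2 * T)⁻¹ • (P z - z)) (closedBall p (D * ε)) :=
    ((hPcont.mono hsub).sub continuousOn_id).const_smul (ε ^ 2 * T)⁻¹
  obtain ⟨z, hz, hPz⟩ := hzeroε _ hQcont fun z hz => by
    refine (norm_inv_smul_sub_le hc (hP z (hsub hz)).1).trans ?_
    rw [← mul_assoc]
    gcongr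
  obtain ⟨φ, rfl, hφ⟩ := (hP z (hsub hz)).2
    (sub_eq_zero.1 ((smul_eq_zero_iff_right (inv_ne_zero hc.ne')).1 hPz))
  exact ⟨φ, hφ, mem_closedBall_iff_norm.1 hz⟩

end Periodic

section Assembly

theorem exists_averagingBounds {E : Type*} [NormedAddCommGroup E] [NormedSpace ℝ E]
    [FiniteDimensional ℝ E] {Ω s : Set E} (hΩ : IsOpen Ω) (hs : IsCompact s) (hconv : Convex ℝ s)
    (hsΩ : s ⊆ Ω) {T : ℝ} (hT : 0 < T) {f g : ℝ → E → E} {L L' K₀ : ℝ≥0}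
    (hfper : ∀ x, Function.Periodic (fun t => f t x) T)
    (hgper : ∀ x, Function.Periodic (fun t => g t x) T)
    (hfd : ∀ t, ∀ x ∈ Ω, DifferentiableAt ℝ (f t) x)
    (hflip : ∀ t, LipschitzOnWith L (fderiv ℝ (f t)) Ω) (hglip : ∀ t, LipschitzOnWith L' (g t) Ω)
    (hfcont : ∀ x ∈ Ω, Continuous fun t => f t x) (hgcont : ∀ x ∈ Ω, Continuous fun t => g t x) :
    ∃ K, ∀ r, BoundedLipschitzOn K₀ r s → AveragingBounds K f g r s := by
  have hfderiv_per : ∀ x ∈ s, Function.Periodic (fun t => fderiv ℝ (f t) x) T := fun x _ t =>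
    congrArg (fderiv ℝ · x) (funext fun y => hfper y t)
  have hfderiv_cont : ∀ x ∈ s, Continuous fun t => fderiv ℝ (f t) x := fun x hx =>
    continuous_fderiv_of_lipschitzOnWith (hΩ.mem_nhds (hsΩ hx)) hfd hflip hfcont
  obtain ⟨K₁, hK₁⟩ := exists_boundedLipschitzOn_of_periodic hT hs hfderiv_per hfderiv_cont
    fun t => (hflip t).mono hsΩ
  have hflip' : ∀ t, LipschitzOnWith K₁ (f t) s := fun t =>
    hconv.lipschitzOnWith_of_nnnorm_fderiv_le (fun x hx => hfd t x (hsΩ hx)) (hK₁.norm_le t)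
  obtain ⟨K₂, hK₂⟩ := exists_boundedLipschitzOn_of_periodic hT hs (fun x _ => hfper x)
    (fun x hx => hfcont x (hsΩ hx)) hflip'
  obtain ⟨K₃, hK₃⟩ := exists_boundedLipschitzOn_of_periodic hT hs (fun x _ => hgper x)
    (fun x hx => hgcont x (hsΩ hx)) fun t => (hglip t).mono hsΩ
  exact ⟨K₀ + K₁ + K₂ + K₃, fun r hr => ⟨fun t x hx => hfd t x (hsΩ hx),
    hK₁.weaken (by rw [add_assoc, add_assoc, add_left_comm]; exact le_self_add),
    hK₂.weaken (by rw [add_right_comm]; exact le_add_self), hK₃.weaken le_add_self,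
    hr.weaken (by rw [add_assoc, add_assoc]; exact le_self_add)⟩⟩

theorem exists_forall_and_tendsto_of_eventually {Φ E : Type*} [Nonempty Φ] [NormedAddCommGroup E]
    {P : ℝ → Φ → Prop} {u : Φ → E} {p : E} {D ε₀ : ℝ} (hε₀ : 0 < ε₀)
    (h : ∀ᶠ ε in 𝓝[>] 0, ε ≤ ε₀ → ∃ φ, P ε φ ∧ ‖u φ - p‖ ≤ D * ε) :
    ∃ ε₁, 0 < ε₁ ∧ ε₁ ≤ ε₀ ∧ ∃ φ : ℝ → Φ, (∀ ε, 0 < ε → ε < ε₁ → P ε (φ ε)) ∧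
      Tendsto (fun ε => u (φ ε)) (𝓝[>] 0) (𝓝 p) := by
  obtain ⟨ε', hε', hsub⟩ := mem_nhdsGT_iff_exists_Ioo_subset.1 h
  have hε₁ : 0 < min ε' ε₀ := lt_min hε' hε₀
  have hex : ∀ ε ∈ Ioo 0 (min ε' ε₀), ∃ φ, P ε φ ∧ ‖u φ - p‖ ≤ D * ε := fun ε hε =>
    hsub ⟨hε.1, hε.2.trans_le (min_le_left _ _)⟩ (hε.2.le.trans (min_le_right _ _))
  choose! φ hφ using hex
  refine ⟨_, hε₁, min_le_right _ _, φ, fun ε hε hlt => (hφ ε ⟨hε, hlt⟩).1, ?_⟩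
  exact tendsto_iff_norm_sub_tendsto_zero.2 (squeeze_zero' (.of_forall fun _ => norm_nonneg _)
    (mem_of_superset (Ioo_mem_nhdsGT hε₁) fun ε hε => (hφ ε hε).2)
    (tendsto_const_mul_nhdsGT_zero D))

end Assembly

end SecondOrderAveraging

end

open SecondOrderAveraging in
/-- **Second-order averaging theorem.** Let `Ω ⊆ ℝⁿ` be open, `T > 0`, `ε₀ > 0`, and let
`f(t,x)`, `g(t,x)` and `R(t,x,ε)` be `T`-periodic in `t`, with `∂f/∂x` Lipschitz in `x`,
`g` and `R` Lipschitz in `x`, all continuous, and `‖R‖` uniformly bounded. Set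
`f⁰(y) = (1/T)∫₀ᵀ f(t,y) dt`, `y¹(t,x) = ∫₀ᵗ f(s,x) ds`,
`f¹(t,x) = (∂f/∂x)(t,x)·y¹(t,x)`, and let `f¹⁰`, `g⁰` be the averages of `f¹`, `g`.
Suppose `f⁰ ≡ 0` on `Ω` and `p ∈ Ω` satisfies `f¹⁰(p) + g⁰(p) = 0` with
`det(∂(f¹⁰+g⁰)/∂y (p)) ≠ 0`. Then there is `ε₁ ∈ (0, ε₀]` such that for every
`ε ∈ (0, ε₁)` the equation `ẋ = εf(t,x) + ε²g(t,x) + ε³R(t,x,ε)` has a `T`-periodic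
solution `φ(·,ε)` in `Ω`, with `φ(0,ε) → p` as `ε → 0`. -/
theorem second_order_averaging {n : ℕ} (Ω : Set (Fin n → ℝ)) (hΩ : IsOpen Ω)
    (T ε₀ : ℝ) (hT : 0 < T) (hε₀ : 0 < ε₀)
    (f g : ℝ → (Fin n → ℝ) → Fin n → ℝ)
    (R : ℝ → (Fin n → ℝ) → ℝ → Fin n → ℝ)
    (hfper : ∀ t x, f (t + T) x = f t x)
    (hgper : ∀ t x, g (t + T) x = g t x)
    (hRper : ∀ t x ε, R (t + T) x ε = R t x ε)
    (hfd : ∀ t, ∀ x ∈ Ω, DifferentiableAt ℝ (f t) x)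
    (hflip : ∃ L : NNReal, ∀ t, LipschitzOnWith L (fderiv ℝ (f t)) Ω)
    (hglip : ∃ L : NNReal, ∀ t, LipschitzOnWith L (g t) Ω)
    (hRlip : ∃ L : NNReal, ∀ t, ∀ ε ∈ Set.Ioc (0 : ℝ) ε₀,
      LipschitzOnWith L (fun x => R t x ε) Ω)
    (hfc : ContinuousOn (fun q : ℝ × (Fin n → ℝ) => f q.1 q.2) (Set.univ ×ˢ Ω))
    (hgc : ContinuousOn (fun q : ℝ × (Fin n → ℝ) => g q.1 q.2) (Set.univ ×ˢ Ω))
    (hRc : ∀ ε ∈ Set.Ioc (0 : ℝ) ε₀,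
      ContinuousOn (fun q : ℝ × (Fin n → ℝ) => R q.1 q.2 ε) (Set.univ ×ˢ Ω))
    (hRbound : ∃ C : ℝ, ∀ t : ℝ, ∀ x ∈ Ω, ∀ ε ∈ Set.Ioc (0 : ℝ) ε₀, ‖R t x ε‖ ≤ C)
    (f0 f10 g0 : (Fin n → ℝ) → Fin n → ℝ)
    (y1 : ℝ → (Fin n → ℝ) → Fin n → ℝ)
    (hf0 : ∀ y, f0 y = (1 / T) • ∫ t in (0 : ℝ)..T, f t y)
    (hy1 : ∀ t x, y1 t x = ∫ s in (0 : ℝ)..t, f s x)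
    (hf10 : ∀ y, f10 y = (1 / T) • ∫ t in (0 : ℝ)..T, (fderiv ℝ (f t) y) (y1 t y))
    (hg0 : ∀ y, g0 y = (1 / T) • ∫ t in (0 : ℝ)..T, g t y)
    (hf0zero : ∀ y ∈ Ω, f0 y = 0)
    (p : Fin n → ℝ) (hp : p ∈ Ω) (hp0 : f10 p + g0 p = 0)
    (hdet : (fderiv ℝ (fun y => f10 y + g0 y) p).det ≠ 0) :
    ∃ ε₁ : ℝ, 0 < ε₁ ∧ ε₁ ≤ ε₀ ∧ ∃ φ : ℝ → ℝ → Fin n → ℝ,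
      (∀ ε : ℝ, 0 < ε → ε < ε₁ →
        (∀ t, φ ε t ∈ Ω) ∧
        (∀ t, HasDerivAt (φ ε)
          (ε • f t (φ ε t) + ε ^ 2 • g t (φ ε t) + ε ^ 3 • R t (φ ε t) ε) t) ∧
        (∀ t, φ ε (t + T) = φ ε t)) ∧
      Filter.Tendsto (fun ε => φ ε 0) (nhdsWithin 0 (Set.Ioi 0)) (nhds p) := by
  obtain ⟨L, hflip⟩ := hflip
  obtain ⟨L', hglip⟩ := hglip
  obtain ⟨LR, hRlip⟩ := hRlip
  obtain ⟨C, hRbound⟩ := hRbound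
  obtain ⟨ρ, hρ, hball⟩ := Metric.nhds_basis_closedBall.mem_iff.1 (hΩ.mem_nhds hp)
  have hfield : averagedField T f g = fun y => f10 y + g0 y := funext fun y => by
    simp only [averagedField, firstCorrection, hf10, hg0, hy1]
  have hmean : ∀ z ∈ Metric.closedBall p ρ, ∫ t in (0 : ℝ)..T, f t z = 0 := fun z hz =>
    (smul_eq_zero_iff_right (one_div_ne_zero hT.ne')).1 ((hf0 z).symm.trans (hf0zero z (hball hz)))
  obtain ⟨K, hK⟩ := exists_averagingBounds (K₀ := max C.toNNReal LR) hΩ (isCompact_closedBall p ρ)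
    (convex_closedBall p ρ) hball hT (fun x t => hfper t x) (fun x t => hgper t x) hfd hflip hglip
    (fun x hx => continuousOn_univ.1 (hfc.uncurry_right x hx))
    (fun x hx => continuousOn_univ.1 (hgc.uncurry_right x hx))
  obtain ⟨D, hD⟩ := exists_eventually_isPeriodicSolution hT hρ (fun x t => hfper t x)
    (fun x t => hgper t x) hmean (by rwa [hfield]) (by rwa [hfield]) K
  have hsolution : ∀ᶠ ε in nhdsWithin 0 (Set.Ioi 0), ε ≤ ε₀ → ∃ φ : ℝ → Fin n → ℝ,
      IsPeriodicSolution (perturbedField ε f g fun t x => R t x ε) T (Metric.closedBall p ρ) φ ∧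
        ‖φ 0 - p‖ ≤ D * ε := by
    filter_upwards [hD, self_mem_nhdsWithin] with ε hDε hε hle
    exact hDε _ (hK _ (.of_norm_le
      (fun x hx => continuousOn_univ.1 (ContinuousOn.uncurry_right (f := fun t x => R t x ε) x
        (hball hx) (hRc ε ⟨hε, hle⟩)))
      (fun t x hx => hRbound t x (hball hx) ε ⟨hε, hle⟩)
      fun t => (hRlip t ε ⟨hε, hle⟩).mono hball)) fun x t => hRper t x ε
  obtain ⟨ε₁, hε₁, hle, φ, hφ, hlim⟩ := exists_forall_and_tendsto_of_eventually hε₀ hsolution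
  exact ⟨ε₁, hε₁, hle, φ, fun ε hε hlt => ⟨fun t => hball ((hφ ε hε hlt).mem t),
    (hφ ε hε hlt).isIntegralCurve, (hφ ε hε hlt).periodic⟩, hlim⟩
end
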